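/- arXiv:1303.4172 — 5 statements merged into one kernel-verified Lean document; each statement's English description precedes it below -/
import Mathlib

section
/- Let ℓ ∈ 𝕃 and let A ∈ ℝ^{m×n} have every entry in [−1,1]. Let λ ∈ ℝⁿ, let v = s·e_j (with s ∈ {±1} and e_j a standard basis vector) satisfy ∇L(Aλ)ᵀAv = −‖Aᵀ∇L(Aλ)‖_∞, set γ̂ := ‖Aᵀ∇L(Aλ)‖_∞/‖∇L(Aλ)‖₁ and C := C_ℓ(ℓ⁻¹(m·L(Aλ))). If α* ≥ 0 is a minimizer of α ↦ L(A(λ + α·v)), then γ̂/C⁴ ≤ α*. In particular, for any shrinkage ν ∈ (0,1], the quadratic-upper-bound step ν·γ̂/C⁴ is at most the shrunk optimal step ν·α*. -/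
open Real Finset

noncomputable section

/-- The property that `C` is a valid curvature constant at level `z`:
`C ≥ 1` and `C⁻¹ ≤ eˣ / ℓ⁽ⁱ⁾(x) ≤ C` for all `x ≤ z` and `i ∈ {0,1,2}`. -/
def CBound (ℓ : ℝ → ℝ) (z C : ℝ) : Prop :=
  1 ≤ C ∧ ∀ x ≤ z, ∀ i ≤ 2,
    C⁻¹ ≤ Real.exp x / iteratedDeriv i ℓ x ∧ Real.exp x / iteratedDeriv i ℓ x ≤ C

/-- `C_ℓ(z)`: the least valid curvature constant at level `z`. -/
def Cconst (ℓ : ℝ → ℝ) (z : ℝ) : ℝ := sInf {C : ℝ | CBound ℓ z C}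

/-- Membership in the class `𝕃`: positive, twice continuously differentiable,
strictly convex, and `C_ℓ(z) < ∞` (i.e. some valid constant exists) for every `z`. -/
def MemL (ℓ : ℝ → ℝ) : Prop :=
  (∀ x, 0 < ℓ x) ∧ ContDiff ℝ 2 ℓ ∧ StrictConvexOn ℝ Set.univ ℓ ∧
    ∀ z : ℝ, ∃ C : ℝ, CBound ℓ z C

/-- Membership in `𝕃_∞`: in `𝕃` and moreover `C_ℓ(z) → 1` as `z → −∞`. -/
def MemLinf (ℓ : ℝ → ℝ) : Prop :=
  MemL ℓ ∧ Filter.Tendsto (Cconst ℓ) Filter.atBot (nhds 1)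

variable {m n : ℕ}

/-- The empirical risk `L(Aλ) = (1/m) Σᵢ ℓ((Aλ)ᵢ)`. -/
def LL (ℓ : ℝ → ℝ) (A : Matrix (Fin m) (Fin n) ℝ) (lam : Fin n → ℝ) : ℝ :=
  (∑ i, ℓ (A.mulVec lam i)) / m

/-- The gradient vector `∇L(Aλ)`, with `i`-th entry `ℓ'((Aλ)ᵢ)/m`. -/
def gradL (ℓ : ℝ → ℝ) (A : Matrix (Fin m) (Fin n) ℝ) (lam : Fin n → ℝ) : Fin m → ℝ :=
  fun i => deriv ℓ (A.mulVec lam i) / m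

/-- `‖Aᵀ ∇L(Aλ)‖_∞`. -/
def gInf (ℓ : ℝ → ℝ) (A : Matrix (Fin m) (Fin n) ℝ) (lam : Fin n → ℝ) : ℝ :=
  ⨆ j : Fin n, |∑ i, gradL ℓ A lam i * A i j|

/-- `‖∇L(Aλ)‖₁`. -/
def gOne (ℓ : ℝ → ℝ) (A : Matrix (Fin m) (Fin n) ℝ) (lam : Fin n → ℝ) : ℝ :=
  ∑ i, |gradL ℓ A lam i|

/-- `γ̂ = ‖Aᵀ∇L(Aλ)‖_∞ / ‖∇L(Aλ)‖₁`. -/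
def gammaHat (ℓ : ℝ → ℝ) (A : Matrix (Fin m) (Fin n) ℝ) (lam : Fin n → ℝ) : ℝ :=
  gInf ℓ A lam / gOne ℓ A lam

/-- `C = C_ℓ(ℓ⁻¹(m · L(Aλ)))`. -/
def Cstep (ℓ : ℝ → ℝ) (A : Matrix (Fin m) (Fin n) ℝ) (lam : Fin n → ℝ) : ℝ :=
  Cconst ℓ (Function.invFun ℓ ((m : ℝ) * LL ℓ A lam))

/-- The (minimum `l¹`) margin `M(Aλ) = min_k (−(Aλ)_k) / ‖λ‖₁`. -/
def margin (A : Matrix (Fin m) (Fin n) ℝ) (lam : Fin n → ℝ) : ℝ :=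
  ⨅ k : Fin m, (-(A.mulVec lam k)) / (∑ j, |lam j|)

/-- The maximum margin `γ = max_{‖λ‖₁=1} min_i (−(Aλ)ᵢ)`. -/
def gammaMax (A : Matrix (Fin m) (Fin n) ℝ) : ℝ :=
  sSup {r : ℝ | ∃ lam : Fin n → ℝ, (∑ j, |lam j|) = 1 ∧ r = ⨅ i : Fin m, -(A.mulVec lam i)}

/-- Boosting iterates: `λ₀ = 0`, `λ_t = λ_{t-1} + α_t • v_t` where `v_t` is a signed
standard basis vector satisfying `∇L(Aλ_{t-1})ᵀ A v_t = −‖Aᵀ∇L(Aλ_{t-1})‖_∞`. -/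
def IsBoostSeq (ℓ : ℝ → ℝ) (A : Matrix (Fin m) (Fin n) ℝ)
    (lam : ℕ → Fin n → ℝ) (α : ℕ → ℝ) (v : ℕ → Fin n → ℝ) : Prop :=
  lam 0 = 0 ∧
  (∀ t : ℕ, 1 ≤ t → lam t = lam (t-1) + α t • v t) ∧
  (∀ t : ℕ, 1 ≤ t → ∃ s : ℝ, (s = 1 ∨ s = -1) ∧ ∃ j : Fin n, v t = s • (Pi.single j (1:ℝ) : Fin n → ℝ)) ∧
  (∀ t : ℕ, 1 ≤ t →
    ∑ i, gradL ℓ A (lam (t-1)) i * A.mulVec (v t) i = - gInf ℓ A (lam (t-1)))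

/-- The quantity `Υ_ν(γ)`. -/
def Upsilon (ν γ : ℝ) : ℝ :=
  ((2/ν) * Real.log 2 - (2/ν) * Real.log ((1+γ) ^ (1-ν) + (1-γ) ^ (1-ν))
      - Real.log (1-γ^2)) /
    (Real.log (1+γ) - Real.log (1-γ))

/-- the optimal step dominates the quadratic-upper-bound step:
`γ̂/C⁴ ≤ α*`, hence `ν·γ̂/C⁴ ≤ ν·α*` for any shrinkage `ν ∈ (0,1]`. -/
theorem qub_le_opt {m n : ℕ} (hm : 0 < m) (hn : 0 < n)
    (A : Matrix (Fin m) (Fin n) ℝ) (hA : ∀ i j, |A i j| ≤ 1)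
    (ℓ : ℝ → ℝ) (hℓ : MemL ℓ)
    (lam : Fin n → ℝ) (s : ℝ) (hs : s = 1 ∨ s = -1) (j : Fin n)
    (v : Fin n → ℝ) (hv : v = s • (Pi.single j (1:ℝ) : Fin n → ℝ))
    (hvgrad : ∑ i, gradL ℓ A lam i * A.mulVec v i = - gInf ℓ A lam)
    (αs : ℝ) (hαs : 0 ≤ αs)
    (hmin : ∀ β : ℝ, LL ℓ A (lam + αs • v) ≤ LL ℓ A (lam + β • v))
    (ν : ℝ) (hν : ν ∈ Set.Ioc (0:ℝ) 1) :
    gammaHat ℓ A lam / (Cstep ℓ A lam)^4 ≤ αs ∧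
    ν * (gammaHat ℓ A lam / (Cstep ℓ A lam)^4) ≤ ν * αs := by
  classical
  obtain ⟨hpos, hcd, hsc, hC⟩ := hℓ
  have hd0 : Differentiable ℝ ℓ := hcd.differentiable (by norm_num)
  have hcd1 : ContDiff ℝ 1 (deriv ℓ) :=
    ((contDiff_succ_iff_deriv (n := 1)).1 (by simpa [one_add_one_eq_two] using hcd)).2.2
  have hd1 : Differentiable ℝ (deriv ℓ) := hcd1.differentiable (by norm_num)
  -- the least constant is attained
  have hqpos : ∀ x, ∀ i ≤ 2, 0 < iteratedDeriv i ℓ x := by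
    intro x i hi
    obtain ⟨C, hC1, hC2⟩ := hC x
    have h := (hC2 x le_rfl i hi).1
    have h1 : 0 < C⁻¹ := by positivity
    have h2 : 0 < Real.exp x / iteratedDeriv i ℓ x := lt_of_lt_of_le h1 h
    exact (div_pos_iff_of_pos_left (Real.exp_pos x)).1 h2
  have hbdd : ∀ z, BddBelow {C : ℝ | CBound ℓ z C} := fun z => ⟨1, fun C h => h.1⟩
  have hCc : ∀ z, 1 ≤ Cconst ℓ z ∧ ∀ x ≤ z, ∀ i ≤ 2,
      iteratedDeriv i ℓ x ≤ Cconst ℓ z * Real.exp x ∧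
      Real.exp x ≤ Cconst ℓ z * iteratedDeriv i ℓ x := by
    intro z
    have hne : {C : ℝ | CBound ℓ z C}.Nonempty := hC z
    refine ⟨le_csInf hne (fun C h => h.1), fun x hx i hi => ⟨?_, ?_⟩⟩
    · rw [← div_le_iff₀ (Real.exp_pos x)]
      refine le_csInf hne (fun C h => ?_)
      have h1 := (h.2 x hx i hi).1
      have hCp : 0 < C := lt_of_lt_of_le one_pos h.1
      have := inv_anti₀ (by positivity) h1
      rwa [inv_inv, inv_div] at this
    · rw [← div_le_iff₀ (hqpos x i hi)]
      exact le_csInf hne (fun C h => (h.2 x hx i hi).2)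
  have hd1pos : ∀ x, 0 < deriv ℓ x := by
    intro x
    have := hqpos x 1 (by norm_num)
    rwa [iteratedDeriv_one] at this
  have hmono : StrictMono ℓ := strictMono_of_deriv_pos hd1pos
  have hd2eq : ∀ x, iteratedDeriv 2 ℓ x = deriv (deriv ℓ) x := by
    intro x
    rw [iteratedDeriv_succ, iteratedDeriv_one]
  have hmono1 : StrictMono (deriv ℓ) := strictMono_of_deriv_pos (fun x => by
    rw [← hd2eq]; exact hqpos x 2 le_rfl)
  -- notation
  have hmR : (0:ℝ) < m := by exact_mod_cast hm
  set x : Fin m → ℝ := A.mulVec lam with hx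
  set u : Fin m → ℝ := A.mulVec v with hu
  have hu1 : ∀ i, u i ^ 2 ≤ 1 := by
    intro i
    have : u i = s * A i j := by
      rw [hu, hv, Matrix.mulVec_smul]
      simp
    rw [this, mul_pow]
    have h1 : s ^ 2 = 1 := by rcases hs with h | h <;> simp [h]
    rw [h1, one_mul]
    exact (sq_le_one_iff_abs_le_one _).2 (hA i j)
  have hline : ∀ (β : ℝ) i, A.mulVec (lam + β • v) i = x i + β * u i := by
    intro β i
    rw [Matrix.mulVec_add, Matrix.mulVec_smul]
    simp [hx, hu]
  set φ : ℝ → ℝ := fun β => ∑ i, ℓ (x i + β * u i) with hφ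
  set ψ : ℝ → ℝ := fun β => ∑ i, deriv ℓ (x i + β * u i) * u i with hψ
  have hLLφ : ∀ β, LL ℓ A (lam + β • v) = φ β / m := by
    intro β
    simp only [LL, hline, hφ]
  have hφmin : ∀ β, φ αs ≤ φ β := by
    intro β
    have h := hmin β
    rw [hLLφ, hLLφ] at h
    exact (div_le_div_iff_of_pos_right hmR).1 h
  have hinner : ∀ i (β : ℝ), HasDerivAt (fun β : ℝ => x i + β * u i) (u i) β := by
    intro i β
    simpa using ((hasDerivAt_id β).mul_const (u i)).const_add (x i)
  have hφd : ∀ β, HasDerivAt φ (ψ β) β := by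
    intro β
    refine HasDerivAt.fun_sum (fun i _ => ?_)
    exact (hd0 _).hasDerivAt.comp β (hinner i β)
  have hψd : ∀ β, HasDerivAt ψ (∑ i, deriv (deriv ℓ) (x i + β * u i) * u i * u i) β := by
    intro β
    refine HasDerivAt.fun_sum (fun i _ => ?_)
    exact ((hd1 _).hasDerivAt.comp β (hinner i β)).mul_const (u i)
  have hψ0 : ψ αs = 0 := by
    have : IsLocalMin φ αs := Filter.Eventually.of_forall hφmin
    exact this.hasDerivAt_eq_zero (hφd αs)
  -- φ is below φ 0 on the segment
  have hφle : ∀ β ∈ Set.Icc 0 αs, φ β ≤ φ 0 := by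
    intro β hβ
    have hconv : ConvexOn ℝ Set.univ φ := by
      have hm1 : Monotone ψ := monotone_of_deriv_nonneg (fun β => (hψd β).differentiableAt)
        (fun β => by
          rw [(hψd β).deriv]
          refine Finset.sum_nonneg (fun i _ => ?_)
          rw [mul_assoc]
          refine mul_nonneg ?_ (mul_self_nonneg _)
          rw [← hd2eq]; exact (hqpos _ 2 le_rfl).le)
      refine Monotone.convexOn_univ_of_deriv (fun β => (hφd β).differentiableAt) ?_
      have : deriv φ = ψ := funext fun β => (hφd β).deriv
      rwa [this]
    have h := hconv.le_max_of_mem_segment (Set.mem_univ 0) (Set.mem_univ αs)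
      (by rw [segment_eq_Icc hαs]; exact hβ)
    exact h.trans (max_le le_rfl (hφmin 0))
  have hφ0 : φ 0 = ∑ i, ℓ (x i) := by simp [hφ]
  have hmL : (m:ℝ) * LL ℓ A lam = φ 0 := by
    rw [hφ0, LL]
    field_simp
    rfl
  set z : ℝ := Function.invFun ℓ ((m : ℝ) * LL ℓ A lam) with hz
  have hℓz : ℓ z = φ 0 := by
    rw [← hmL]
    apply Function.invFun_eq
    rw [hmL]
    let i0 : Fin m := ⟨0, hm⟩
    have hlow : ℓ (x i0) ≤ φ 0 := by
      rw [hφ0]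
      exact Finset.single_le_sum (f := fun i => ℓ (x i)) (fun i _ => (hpos _).le)
        (Finset.mem_univ i0)
    set d := deriv ℓ (x i0) with hd
    have hdp : 0 < d := hd1pos _
    set b := x i0 + (φ 0 - ℓ (x i0)) / d with hb
    have hab : x i0 ≤ b := by
      have : 0 ≤ (φ 0 - ℓ (x i0)) / d := div_nonneg (by linarith) hdp.le
      linarith
    have hup : φ 0 ≤ ℓ b := by
      have h := (convex_Icc (x i0) b).mul_sub_le_image_sub_of_le_deriv (f := ℓ)
        hd0.continuous.continuousOn hd0.differentiableOn (C := d)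
        (fun y hy => hmono1.monotone (by
          rw [interior_Icc] at hy; exact hy.1.le))
        (x i0) (Set.left_mem_Icc.2 hab) b (Set.right_mem_Icc.2 hab) hab
      have h2 : d * (b - x i0) = φ 0 - ℓ (x i0) := by
        rw [hb]; field_simp; ring
      linarith
    obtain ⟨y, _, hy⟩ := intermediate_value_Icc hab hd0.continuous.continuousOn
      ⟨hlow, hup⟩
    exact ⟨y, hy⟩
  obtain ⟨hC1, hCb⟩ := hCc z
  have hCs : Cstep ℓ A lam = Cconst ℓ z := rfl
  rw [hCs]
  set C := Cconst ℓ z with hCdef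
  have hCp : 0 < C := lt_of_lt_of_le one_pos hC1
  have hle_z : ∀ β ∈ Set.Icc 0 αs, ∀ i, x i + β * u i ≤ z := by
    intro β hβ i
    rw [← hmono.le_iff_le, hℓz]
    refine le_trans ?_ (hφle β hβ)
    exact Finset.single_le_sum (f := fun i => ℓ (x i + β * u i)) (fun i _ => (hpos _).le)
        (Finset.mem_univ i)
  have h21 : ∀ y ≤ z, deriv (deriv ℓ) y ≤ C ^ 2 * ℓ y := by
    intro y hy
    have h2 := (hCb y hy 2 le_rfl).1
    have h0 := (hCb y hy 0 (by norm_num)).2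
    rw [hd2eq] at h2
    rw [iteratedDeriv_zero] at h0
    nlinarith
  have h01 : ∀ y ≤ z, ℓ y ≤ C ^ 2 * deriv ℓ y := by
    intro y hy
    have h2 := (hCb y hy 0 (by norm_num)).1
    have h0 := (hCb y hy 1 (by norm_num)).2
    rw [iteratedDeriv_one] at h0
    rw [iteratedDeriv_zero] at h2
    nlinarith
  have hgOne : ∑ i, deriv ℓ (x i) = m * gOne ℓ A lam := by
    rw [gOne, Finset.mul_sum]
    refine Finset.sum_congr rfl (fun i _ => ?_)
    simp only [gradL]
    rw [abs_of_pos (div_pos (hd1pos _) hmR)]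
    field_simp
    rfl
  have hgInf : ψ 0 = - (m * gInf ℓ A lam) := by
    rw [← mul_neg, ← hvgrad, Finset.mul_sum]
    refine Finset.sum_congr rfl (fun i _ => ?_)
    simp only [gradL, zero_mul, add_zero]
    field_simp
    exact mul_comm _ _
  have hgpos : 0 < gOne ℓ A lam := by
    have : 0 < ∑ i, deriv ℓ (x i) :=
      Finset.sum_pos (fun i _ => hd1pos _) ⟨⟨0, hm⟩, Finset.mem_univ _⟩
    rw [hgOne] at this
    exact (pos_iff_pos_of_mul_pos this).1 hmR
  have hφ0le : φ 0 ≤ C ^ 2 * (m * gOne ℓ A lam) := by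
    rw [hφ0, ← hgOne, Finset.mul_sum]
    refine Finset.sum_le_sum (fun i _ => h01 _ ?_)
    simpa using hle_z 0 ⟨le_rfl, hαs⟩ i
  have hψ' : ∀ β ∈ Set.Icc 0 αs, deriv ψ β ≤ C ^ 4 * (m * gOne ℓ A lam) := by
    intro β hβ
    rw [(hψd β).deriv]
    have h1 : ∑ i, deriv (deriv ℓ) (x i + β * u i) * u i * u i ≤ C ^ 2 * φ β := by
      rw [hφ, Finset.mul_sum]
      refine Finset.sum_le_sum (fun i _ => ?_)
      have h2 : 0 < deriv (deriv ℓ) (x i + β * u i) := by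
        rw [← hd2eq]; exact hqpos _ 2 le_rfl
      have h3 := h21 _ (hle_z β hβ i)
      have h4 := hu1 i
      nlinarith
    have h5 : C ^ 2 * φ β ≤ C ^ 2 * (C ^ 2 * (m * gOne ℓ A lam)) :=
      mul_le_mul_of_nonneg_left ((hφle β hβ).trans hφ0le) (by positivity)
    calc _ ≤ _ := h1
      _ ≤ _ := h5
      _ = _ := by ring
  have hdiffψ : Differentiable ℝ ψ := fun β => (hψd β).differentiableAt
  have hfin := (convex_Icc 0 αs).image_sub_le_mul_sub_of_deriv_le (f := ψ)
    hdiffψ.continuous.continuousOn hdiffψ.differentiableOn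
    (fun β hβ => hψ' β (interior_subset hβ))
    0 (Set.left_mem_Icc.2 hαs) αs (Set.right_mem_Icc.2 hαs) hαs
  rw [hψ0, hgInf] at hfin
  have hkey : gInf ℓ A lam ≤ αs * C ^ 4 * gOne ℓ A lam := by
    refine le_of_mul_le_mul_left ?_ hmR
    calc (m:ℝ) * gInf ℓ A lam ≤ C ^ 4 * (m * gOne ℓ A lam) * (αs - 0) := by linarith
      _ = _ := by ring
  have hmain : gammaHat ℓ A lam / C ^ 4 ≤ αs := by
    rw [gammaHat, div_le_iff₀ (by positivity), div_le_iff₀ hgpos]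
    exact hkey
  exact ⟨hmain, mul_le_mul_of_nonneg_left hmain hν.1.le⟩
end
end

section
/- Let ℓ ∈ 𝕃 and let A ∈ ℝ^{m×n} have every entry in [−1,1]. Let λ ∈ ℝⁿ, let v = s·e_j (s ∈ {±1}) satisfy ∇L(Aλ)ᵀAv = −‖Aᵀ∇L(Aλ)‖_∞, set γ̂ := ‖Aᵀ∇L(Aλ)‖_∞/‖∇L(Aλ)‖₁ and C := C_ℓ(ℓ⁻¹(m·L(Aλ))), and let α* ≥ 0 be a minimizer of α ↦ L(A(λ + α·v)). Then for any ν ∈ (0,1], every step α with ν·γ̂/C⁴ ≤ α ≤ ν·α* satisfies L(A(λ + α·v)) ≤ L(Aλ)·exp(−ν(2−ν)·γ̂²/(2C⁶)). -/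
open Real Finset

noncomputable section

variable {m n : ℕ}

lemma ssi_cbound (ℓ : ℝ → ℝ) (hℓ : MemL ℓ) (z : ℝ) : CBound ℓ z (Cconst ℓ z) := by
  obtain ⟨C0, hC0⟩ := hℓ.2.2.2 z
  have hne : {C : ℝ | CBound ℓ z C}.Nonempty := ⟨C0, hC0⟩
  have h1 : 1 ≤ Cconst ℓ z := le_csInf hne (fun C hC => hC.1)
  refine ⟨h1, fun x hx i hi => ⟨?_, ?_⟩⟩
  · have hq : 0 < Real.exp x / iteratedDeriv i ℓ x :=
      lt_of_lt_of_le (inv_pos.mpr (by linarith [hC0.1])) (hC0.2 x hx i hi).1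
    have : (Real.exp x / iteratedDeriv i ℓ x)⁻¹ ≤ Cconst ℓ z := by
      refine le_csInf hne (fun C hC => ?_)
      have h2 := (hC.2 x hx i hi).1
      have hCp : 0 < C := by linarith [hC.1]
      exact inv_le_of_inv_le₀ hCp h2
    exact inv_le_of_inv_le₀ hq this
  · exact le_csInf hne (fun C hC => (hC.2 x hx i hi).2)

lemma ssi_cb {ℓ : ℝ → ℝ} {z C : ℝ} (h : CBound ℓ z C) {x : ℝ} (hx : x ≤ z) {i : ℕ} (hi : i ≤ 2) :
    0 < iteratedDeriv i ℓ x ∧ iteratedDeriv i ℓ x ≤ C * Real.exp x ∧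
      Real.exp x ≤ C * iteratedDeriv i ℓ x := by
  obtain ⟨h1, h2⟩ := h.2 x hx i hi
  have hC : 0 < C := by linarith [h.1]
  have hq := lt_of_lt_of_le (inv_pos.mpr hC) h1
  have hD : 0 < iteratedDeriv i ℓ x := by
    by_contra hn
    push Not at hn
    have := div_nonpos_of_nonneg_of_nonpos (Real.exp_pos x).le hn
    linarith
  refine ⟨hD, ?_, (div_le_iff₀ hD).1 h2⟩
  rw [le_div_iff₀ hD, inv_mul_le_iff₀ hC] at h1
  exact h1

lemma ssi_taylor (f df ddf : ℝ → ℝ) (K T : ℝ) (hT : 0 ≤ T)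
    (hf : ∀ t, HasDerivAt f (df t) t) (hdf1 : ∀ t, HasDerivAt df (ddf t) t)
    (hK : ∀ t ∈ Set.Icc 0 T, ddf t ≤ K) :
    f T ≤ f 0 + df 0 * T + K / 2 * T ^ 2 := by
  have d1 : ∀ t, HasDerivAt (fun t => df t - K * t) (ddf t - K) t := fun t => by
    simpa using (hdf1 t).fun_sub ((hasDerivAt_id' t).const_mul K)
  have a1 : AntitoneOn (fun t => df t - K * t) (Set.Icc 0 T) := by
    refine antitoneOn_of_deriv_nonpos (convex_Icc 0 T)
      (fun t _ => (d1 t).continuousAt.continuousWithinAt)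
      (fun t _ => (d1 t).differentiableAt.differentiableWithinAt) (fun t ht => ?_)
    rw [(d1 t).deriv]
    linarith [hK t (interior_subset ht)]
  have d2 : ∀ t, HasDerivAt (fun t => f t - df 0 * t - K / 2 * t ^ 2) (df t - df 0 - K * t) t := by
    intro t
    have := ((hf t).fun_sub ((hasDerivAt_id' t).const_mul (df 0))).fun_sub
      (((hasDerivAt_id' t).fun_pow 2).const_mul (K / 2))
    refine this.congr_deriv ?_
    push_cast
    ring
  have a2 : AntitoneOn (fun t => f t - df 0 * t - K / 2 * t ^ 2) (Set.Icc 0 T) := by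
    refine antitoneOn_of_deriv_nonpos (convex_Icc 0 T)
      (fun t _ => (d2 t).continuousAt.continuousWithinAt)
      (fun t _ => (d2 t).differentiableAt.differentiableWithinAt) (fun t ht => ?_)
    rw [(d2 t).deriv]
    have ht' := interior_subset ht
    have := a1 (Set.left_mem_Icc.2 hT) ht' ht'.1
    simp only [mul_zero, sub_zero] at this
    linarith
  have := a2 (Set.left_mem_Icc.2 hT) (Set.right_mem_Icc.2 hT) hT
  simp only [mul_zero, sub_zero] at this
  nlinarith

/-- single-step improvement for any step
`ν·γ̂/C⁴ ≤ α ≤ ν·α*`:  `L(A(λ+αv)) ≤ L(Aλ)·exp(−ν(2−ν)γ̂²/(2C⁶))`. -/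
theorem single_step_improvement {m n : ℕ} (hm : 0 < m) (hn : 0 < n)
    (A : Matrix (Fin m) (Fin n) ℝ) (hA : ∀ i j, |A i j| ≤ 1)
    (ℓ : ℝ → ℝ) (hℓ : MemL ℓ)
    (lam : Fin n → ℝ) (s : ℝ) (hs : s = 1 ∨ s = -1) (j : Fin n)
    (v : Fin n → ℝ) (hv : v = s • (Pi.single j (1:ℝ) : Fin n → ℝ))
    (hvgrad : ∑ i, gradL ℓ A lam i * A.mulVec v i = - gInf ℓ A lam)
    (αs : ℝ) (hαs : 0 ≤ αs)
    (hmin : ∀ β : ℝ, LL ℓ A (lam + αs • v) ≤ LL ℓ A (lam + β • v))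
    (ν : ℝ) (hν : ν ∈ Set.Ioc (0:ℝ) 1)
    (α : ℝ)
    (hα₁ : ν * (gammaHat ℓ A lam / (Cstep ℓ A lam)^4) ≤ α)
    (hα₂ : α ≤ ν * αs) :
    LL ℓ A (lam + α • v) ≤
      LL ℓ A lam *
        Real.exp (-(ν * (2-ν) * (gammaHat ℓ A lam)^2 / (2 * (Cstep ℓ A lam)^6))) := by
  obtain ⟨hpos, hcd, hsc, hC⟩ := id hℓ
  have hmR : (0:ℝ) < m := by exact_mod_cast hm
  have hd1 : ∀ x, HasDerivAt ℓ (deriv ℓ x) x := fun x =>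
    (hcd.differentiable (by norm_num) x).hasDerivAt
  have hd2 : ∀ x, HasDerivAt (deriv ℓ) (iteratedDeriv 2 ℓ x) x := fun x => by
    have h := (hcd.differentiable_iteratedDeriv 1 (by norm_num)) x
    rw [iteratedDeriv_one] at h
    have h2 := h.hasDerivAt
    rw [show (2:ℕ) = 1 + 1 from rfl, iteratedDeriv_succ, iteratedDeriv_one]
    exact h2
  have hd1pos : ∀ x, 0 < deriv ℓ x := fun x => by
    obtain ⟨C, hC⟩ := hC x
    have := (ssi_cb hC le_rfl (i := 1) (by norm_num)).1
    rwa [iteratedDeriv_one] at this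
  have hmono : StrictMono ℓ := strictMono_of_deriv_pos hd1pos
  have hcont : Continuous ℓ := hcd.continuous
  set x : Fin m → ℝ := A.mulVec lam with hx
  set a : Fin m → ℝ := A.mulVec v with ha
  have ha1 : ∀ i, |a i| ≤ 1 := fun i => by
    have : a i = s * A i j := by
      rw [ha, hv, Matrix.mulVec_smul, Matrix.mulVec_single_one]
      simp
    rw [this, abs_mul]
    rcases hs with rfl | rfl <;> simpa using hA i j
  set f : ℝ → ℝ := fun t => (∑ i, ℓ (x i + t * a i)) / m with hf
  have hfL : ∀ t, LL ℓ A (lam + t • v) = f t := fun t => by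
    simp only [LL, hf, Matrix.mulVec_add, Matrix.mulVec_smul, Pi.add_apply, Pi.smul_apply,
      smul_eq_mul, hx, ha]
  have hf0 : LL ℓ A lam = f 0 := by simp [LL, hf, hx]
  have hmin' : ∀ t, f αs ≤ f t := fun t => by
    have := hmin t
    rwa [hfL, hfL] at this
  have hfconv : ConvexOn ℝ Set.univ f := by
    refine ⟨convex_univ, fun p _ q _ c d hc hd hcd => ?_⟩
    simp only [hf, smul_eq_mul]
    rw [mul_div_assoc', mul_div_assoc', ← add_div, Finset.mul_sum, Finset.mul_sum,
      ← Finset.sum_add_distrib]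
    refine div_le_div_of_nonneg_right (Finset.sum_le_sum fun i _ => ?_) hmR.le
    have := hsc.convexOn.2 (Set.mem_univ (x i + p * a i)) (Set.mem_univ (x i + q * a i)) hc hd hcd
    simp only [smul_eq_mul] at this
    refine le_trans (le_of_eq ?_) this
    congr 1
    have : d = 1 - c := by linarith
    subst this
    ring
  have hdec : ∀ p q, p ≤ q → q ≤ αs → f q ≤ f p := fun p q hpq hq => by
    have := hfconv.le_max_of_mem_Icc (Set.mem_univ p) (Set.mem_univ αs) ⟨hpq, hq⟩
    rwa [max_eq_left (hmin' p)] at this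
  have hmf : ∀ t, m * f t = ∑ i, ℓ (x i + t * a i) := fun t => by
    simp only [hf]; field_simp
  have hle : ∀ t i, ℓ (x i + t * a i) ≤ m * f t := fun t i => by
    rw [hmf]
    exact Finset.single_le_sum (f := fun i => ℓ (x i + t * a i))
      (fun i _ => (hpos _).le) (Finset.mem_univ i)
  have hf0pos : 0 < f 0 := by
    have h1 := hle 0 ⟨0, hm⟩
    have h2 := hpos (x ⟨0, hm⟩ + 0 * a ⟨0, hm⟩)
    exact pos_of_mul_pos_right (lt_of_lt_of_le h2 h1) hmR.le
  -- the level
  have hz : ℓ (Function.invFun ℓ (m * LL ℓ A lam)) = m * f 0 := by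
    rw [hf0]
    apply Function.invFun_eq
    have hlo := hle 0 ⟨0, hm⟩
    set y := x ⟨0, hm⟩ + 0 * a ⟨0, hm⟩ with hy
    -- tangent line bound
    have htan : ∀ w, y < w → deriv ℓ y * (w - y) ≤ ℓ w - ℓ y := fun w hw => by
      have := hsc.convexOn.deriv_le_slope (Set.mem_univ y) (Set.mem_univ w) hw
        (hd1 y).differentiableAt
      rw [slope_def_field, le_div_iff₀ (by linarith)] at this
      exact this
    have hw := htan (y + (m * f 0 - ℓ y) / deriv ℓ y + 1) (by
      have : 0 ≤ (m * f 0 - ℓ y) / deriv ℓ y := div_nonneg (by linarith) (hd1pos y).le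
      linarith)
    have hhi : m * f 0 ≤ ℓ (y + (m * f 0 - ℓ y) / deriv ℓ y + 1) := by
      have h3 : deriv ℓ y * (y + (m * f 0 - ℓ y) / deriv ℓ y + 1 - y)
          = m * f 0 - ℓ y + deriv ℓ y := by
        have := (hd1pos y).ne'
        field_simp
        ring
      linarith [hd1pos y]
    exact mem_range_of_exists_le_of_exists_ge hcont ⟨_, hlo⟩ ⟨_, hhi⟩
  have hCB : CBound ℓ (Function.invFun ℓ (m * LL ℓ A lam)) (Cstep ℓ A lam) := ssi_cbound ℓ hℓ _
  set z := Function.invFun ℓ (m * LL ℓ A lam) with hzdef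
  set C := Cstep ℓ A lam with hCdef
  set g := gammaHat ℓ A lam with hg
  have hC1 : 1 ≤ C := hCB.1
  have hC0 : 0 < C := by linarith
  have hxz : ∀ t, 0 ≤ t → t ≤ αs → ∀ i, x i + t * a i ≤ z := fun t h0 h1 i => by
    rw [← hmono.le_iff_le, hz]
    exact (hle t i).trans (mul_le_mul_of_nonneg_left (hdec 0 t h0 h1) hmR.le)
  -- derivatives
  set df : ℝ → ℝ := fun t => (∑ i, deriv ℓ (x i + t * a i) * a i) / m with hdf1
  set ddf : ℝ → ℝ := fun t => (∑ i, iteratedDeriv 2 ℓ (x i + t * a i) * a i * a i) / m with hddf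
  have haff : ∀ t i, HasDerivAt (fun t => x i + t * a i) (a i) t := fun t i => by
    simpa using ((hasDerivAt_id t).mul_const (a i)).const_add (x i)
  have hdf : ∀ t, HasDerivAt f (df t) t := fun t => by
    refine HasDerivAt.div_const (HasDerivAt.fun_sum fun i _ => ?_) _
    exact (hd1 (x i + t * a i)).comp t (haff t i)
  have hdf2 : ∀ t, HasDerivAt df (ddf t) t := fun t => by
    refine HasDerivAt.div_const (HasDerivAt.fun_sum fun i _ => ?_) _
    exact ((hd2 (x i + t * a i)).comp t (haff t i)).mul_const _
  have hddfle : ∀ t, 0 ≤ t → t ≤ αs → ddf t ≤ C ^ 2 * f 0 := fun t h0 h1 => by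
    refine le_trans ?_ (mul_le_mul_of_nonneg_left (hdec 0 t h0 h1) (by positivity))
    simp only [hddf, hf]
    rw [mul_div_assoc', Finset.mul_sum]
    refine div_le_div_of_nonneg_right (Finset.sum_le_sum fun i _ => ?_) hmR.le
    obtain ⟨p2, u2, -⟩ := ssi_cb hCB (hxz t h0 h1 i) (i := 2) le_rfl
    obtain ⟨-, -, w0⟩ := ssi_cb hCB (hxz t h0 h1 i) (i := 0) (by norm_num)
    rw [iteratedDeriv_zero] at w0
    have hsq : a i * a i ≤ 1 := by
      rw [← abs_mul_abs_self]
      nlinarith [ha1 i, abs_nonneg (a i)]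
    calc iteratedDeriv 2 ℓ (x i + t * a i) * a i * a i
        = iteratedDeriv 2 ℓ (x i + t * a i) * (a i * a i) := by ring
      _ ≤ iteratedDeriv 2 ℓ (x i + t * a i) * 1 := mul_le_mul_of_nonneg_left hsq p2.le
      _ ≤ C * Real.exp (x i + t * a i) := by linarith
      _ ≤ C * (C * ℓ (x i + t * a i)) := mul_le_mul_of_nonneg_left w0 hC0.le
      _ = C ^ 2 * ℓ (x i + t * a i) := by ring
  -- gradient norms
  have hGnn : 0 ≤ gInf ℓ A lam := Real.iSup_nonneg fun _ => abs_nonneg _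
  have hone : f 0 ≤ C ^ 2 * gOne ℓ A lam := by
    simp only [hf, gOne, gradL]
    rw [Finset.sum_div, Finset.mul_sum]
    refine Finset.sum_le_sum fun i _ => ?_
    have hxi := hxz 0 le_rfl hαs i
    obtain ⟨-, u0, -⟩ := ssi_cb hCB hxi (i := 0) (by norm_num)
    obtain ⟨-, -, w1⟩ := ssi_cb hCB hxi (i := 1) (by norm_num)
    rw [iteratedDeriv_zero] at u0
    rw [iteratedDeriv_one] at w1
    simp only [zero_mul, add_zero] at u0 w1 ⊢
    rw [abs_of_nonneg (div_nonneg (hd1pos _).le hmR.le), mul_div_assoc']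
    refine div_le_div_of_nonneg_right ?_ hmR.le
    calc ℓ (x i) ≤ C * Real.exp (x i) := u0
      _ ≤ C * (C * deriv ℓ (x i)) := mul_le_mul_of_nonneg_left w1 hC0.le
      _ = C ^ 2 * deriv ℓ (x i) := by ring
  have honepos : 0 < gOne ℓ A lam :=
    pos_of_mul_pos_right (lt_of_lt_of_le hf0pos hone) (by positivity)
  have hgnn : 0 ≤ g := div_nonneg hGnn honepos.le
  have hGg : gInf ℓ A lam = g * gOne ℓ A lam := by
    rw [hg, gammaHat, div_mul_cancel₀ _ honepos.ne']
  have hdf10 : df 0 = - gInf ℓ A lam := by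
    rw [← hvgrad]
    simp only [hdf1, gradL, zero_mul, add_zero, Finset.sum_div]
    refine Finset.sum_congr rfl fun i _ => ?_
    ring
  have hdf1le : df 0 ≤ - (g * f 0 / C ^ 2) := by
    rw [hdf10, hGg]
    have : f 0 / C ^ 2 ≤ gOne ℓ A lam := by
      rw [div_le_iff₀ (by positivity)]; linarith
    have := mul_le_mul_of_nonneg_left this hgnn
    rw [mul_div_assoc]; linarith
  -- assemble
  obtain ⟨hν0, hν1⟩ := hν
  have hααs : α ≤ αs := hα₂.trans (by nlinarith)
  set T := ν * (g / C ^ 4) with hT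
  have hT0 : 0 ≤ T := by positivity
  have hTs : T ≤ αs := hα₁.trans hααs
  have htay := ssi_taylor f df ddf (C ^ 2 * f 0) T hT0 hdf hdf2
    (fun t ht => hddfle t ht.1 (ht.2.trans hTs))
  have h1 := mul_le_mul_of_nonneg_right hdf1le hT0
  rw [hfL, hf0]
  set E := ν * (2 - ν) * g ^ 2 / (2 * C ^ 6) with hE
  have hkey : f 0 + -(g * f 0 / C ^ 2) * T + C ^ 2 * f 0 / 2 * T ^ 2 = f 0 * (1 - E) := by
    rw [hT, hE]
    field_simp
    ring
  have hexp : 1 - E ≤ Real.exp (-E) := by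
    have := Real.add_one_le_exp (-E)
    linarith
  calc f α ≤ f T := hdec T α hα₁ hααs
    _ ≤ f 0 * (1 - E) := by linarith
    _ ≤ f 0 * Real.exp (-E) := mul_le_mul_of_nonneg_left hexp hf0pos.le
end
end

section
/- Let ℓ ∈ 𝕃, ν ∈ (0,1], and let {λ_t} be boosting iterates whose steps satisfy α_qub_i ≤ α_i ≤ α_opt_i for every i ≥ 1 (where α_qub_i := ν·γ_i/C_i⁴ and α_opt_i := ν times a minimizer of α ↦ L(A(λ_{i−1} + α·v_i))). Then for all integers t > t₀ ≥ 0: L(Aλ_t) ≤ L(Aλ_{t₀})·exp(−(ν(2−ν)/(2·C_{t₀+1}⁶))·Σ_{i=t₀+1}^{t} γ_i²). -/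
open Real Finset

noncomputable section

variable {m n : ℕ}

lemma rc_pos {ℓ : ℝ → ℝ} (hℓ : MemL ℓ) (x : ℝ) (i : ℕ) (hi : i ≤ 2) :
    0 < iteratedDeriv i ℓ x := by
  obtain ⟨C, hC1, hC⟩ := hℓ.2.2.2 x
  have h := (hC x le_rfl i hi).1
  have h0 : 0 < Real.exp x / iteratedDeriv i ℓ x :=
    lt_of_lt_of_le (inv_pos.mpr (by linarith)) h
  by_contra hneg
  push Not at hneg
  have := div_nonpos_of_nonneg_of_nonpos (Real.exp_pos x).le hneg
  linarith

lemma rc_deriv_pos {ℓ : ℝ → ℝ} (hℓ : MemL ℓ) (x : ℝ) : 0 < deriv ℓ x := by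
  have := rc_pos hℓ x 1 (by norm_num)
  rwa [iteratedDeriv_one] at this

lemma rc_hasDeriv {ℓ : ℝ → ℝ} (hℓ : MemL ℓ) (x : ℝ) : HasDerivAt ℓ (deriv ℓ x) x :=
  ((hℓ.2.1.differentiable (by norm_num)) x).hasDerivAt

lemma rc_hasDeriv2 {ℓ : ℝ → ℝ} (hℓ : MemL ℓ) (x : ℝ) :
    HasDerivAt (deriv ℓ) (iteratedDeriv 2 ℓ x) x := by
  have h : Differentiable ℝ (iteratedDeriv 1 ℓ) :=
    hℓ.2.1.differentiable_iteratedDeriv 1 (by norm_num)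
  rw [iteratedDeriv_one] at h
  have h2 := (h x).hasDerivAt
  rwa [show iteratedDeriv 2 ℓ = deriv (deriv ℓ) by
    rw [iteratedDeriv_succ, iteratedDeriv_one]]

lemma rc_strictMono {ℓ : ℝ → ℝ} (hℓ : MemL ℓ) : StrictMono ℓ :=
  strictMono_of_deriv_pos (rc_deriv_pos hℓ)

lemma rc_surj {ℓ : ℝ → ℝ} (hℓ : MemL ℓ) (y : ℝ) (hy : 0 < y) : ∃ x, ℓ x = y := by
  have hcont : Continuous ℓ := hℓ.2.1.continuous
  -- small values
  obtain ⟨C, hC1, hC⟩ := hℓ.2.2.2 0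
  have hCpos : 0 < C := by linarith
  have hlow : ∃ a, ℓ a ≤ y := by
    refine ⟨min 0 (Real.log (y / C)), ?_⟩
    set a := min 0 (Real.log (y / C))
    have h := (hC a (min_le_left _ _) 0 (by norm_num)).1
    rw [iteratedDeriv_zero, le_div_iff₀ (hℓ.1 a)] at h
    have h2 : ℓ a ≤ C * Real.exp a := by
      have := mul_le_mul_of_nonneg_left h hCpos.le
      rwa [← mul_assoc, mul_inv_cancel₀ hCpos.ne', one_mul] at this
    have h3 : Real.exp a ≤ y / C := by
      calc Real.exp a ≤ Real.exp (Real.log (y / C)) := Real.exp_le_exp.mpr (min_le_right _ _)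
        _ = y / C := Real.exp_log (by positivity)
    calc ℓ a ≤ C * Real.exp a := h2
      _ ≤ C * (y / C) := by gcongr
      _ = y := by field_simp
  have hhigh : ∃ b, y ≤ ℓ b := by
    -- tangent line at zero, using convexity
    have h1 := hℓ.2.2.1.convexOn
    have hd := rc_deriv_pos hℓ 0
    refine ⟨y / deriv ℓ 0, ?_⟩
    have hb : 0 < y / deriv ℓ 0 := by positivity
    have h := h1.le_slope_of_hasDerivAt (Set.mem_univ 0) (Set.mem_univ _) hb (rc_hasDeriv hℓ 0)
    rw [slope_def_field, le_div_iff₀ (by linarith)] at h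
    have h0 := hℓ.1 0
    have : deriv ℓ 0 * (y / deriv ℓ 0 - 0) = y := by field_simp; ring
    linarith
  obtain ⟨a, ha⟩ := hlow
  obtain ⟨b, hb⟩ := hhigh
  exact mem_range_of_exists_le_of_exists_ge hcont ⟨a, ha⟩ ⟨b, hb⟩

lemma rc_Cconst {ℓ : ℝ → ℝ} (hℓ : MemL ℓ) (z : ℝ) : CBound ℓ z (Cconst ℓ z) := by
  have hne : {C : ℝ | CBound ℓ z C}.Nonempty := hℓ.2.2.2 z
  have h1 : 1 ≤ Cconst ℓ z := le_csInf hne (fun C hC => hC.1)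
  refine ⟨h1, fun x hx i hi => ⟨?_, ?_⟩⟩
  · have hp : 0 < Real.exp x / iteratedDeriv i ℓ x :=
      div_pos (Real.exp_pos x) (rc_pos hℓ x i hi)
    apply inv_le_of_inv_le₀ hp
    refine le_csInf hne (fun C hC => ?_)
    exact inv_le_of_inv_le₀ (by linarith [hC.1]) (hC.2 x hx i hi).1
  · exact le_csInf hne (fun C hC => (hC.2 x hx i hi).2)

lemma rc_Cconst_mono {ℓ : ℝ → ℝ} (hℓ : MemL ℓ) {z z' : ℝ} (h : z ≤ z') :
    Cconst ℓ z ≤ Cconst ℓ z' := by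
  have hb := rc_Cconst hℓ z'
  refine csInf_le ⟨1, fun C hC => hC.1⟩ ?_
  exact ⟨hb.1, fun x hx i hi => hb.2 x (hx.trans h) i hi⟩

lemma rc_taylor (f f' f'' : ℝ → ℝ) (K q : ℝ) (hq : 0 ≤ q)
    (h1 : ∀ x, HasDerivAt f (f' x) x) (h2 : ∀ x, HasDerivAt f' (f'' x) x)
    (hK : ∀ x, 0 ≤ x → x ≤ q → f'' x ≤ K) :
    f q ≤ f 0 + q * f' 0 + K * q ^ 2 / 2 := by
  have hd : ∀ x ∈ Set.Icc 0 q, f' x ≤ f' 0 + K * x := by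
    have hm : MonotoneOn (fun x => K * x - f' x) (Set.Icc 0 q) := by
      have hh : ∀ x, HasDerivAt (fun x => K * x - f' x) (K * 1 - f'' x) x := fun x =>
        ((hasDerivAt_id x).const_mul K).sub (h2 x)
      apply monotoneOn_of_deriv_nonneg (convex_Icc 0 q)
      · exact fun x _ => (hh x).continuousAt.continuousWithinAt
      · exact fun x _ => (hh x).differentiableAt.differentiableWithinAt
      · intro x hx
        rw [interior_Icc] at hx
        rw [(hh x).deriv]
        linarith [hK x hx.1.le hx.2.le]
    intro x hx
    have := hm (Set.left_mem_Icc.mpr hq) hx hx.1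
    simp only at this
    linarith
  have hm : MonotoneOn (fun x => x * f' 0 + K / 2 * x ^ 2 - f x) (Set.Icc 0 q) := by
    have hh : ∀ x, HasDerivAt (fun x => x * f' 0 + K / 2 * x ^ 2 - f x)
        (1 * f' 0 + K / 2 * (((2 : ℕ) : ℝ) * x ^ (2 - 1)) - f' x) x := fun x =>
      (((hasDerivAt_id x).mul_const (f' 0)).add ((hasDerivAt_pow 2 x).const_mul (K / 2))).sub (h1 x)
    apply monotoneOn_of_deriv_nonneg (convex_Icc 0 q)
    · exact fun x _ => (hh x).continuousAt.continuousWithinAt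
    · exact fun x _ => (hh x).differentiableAt.differentiableWithinAt
    · intro x hx
      rw [interior_Icc] at hx
      rw [(hh x).deriv]
      have := hd x ⟨hx.1.le, hx.2.le⟩
      norm_num
      linarith
  have := hm (Set.left_mem_Icc.mpr hq) (Set.right_mem_Icc.mpr hq) hq
  simp only at this
  linarith

lemma rc_core {m : ℕ} {ℓ : ℝ → ℝ} (hℓ : MemL ℓ) (x w : Fin m → ℝ) (hw : ∀ i, |w i| ≤ 1)
    (z C γ ν a astar : ℝ) (hC : CBound ℓ z C) (hz : ℓ z = ∑ i, ℓ (x i))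
    (hγ : 0 ≤ γ) (hD : ∑ i, deriv ℓ (x i) * w i = -(γ * ∑ i, deriv ℓ (x i)))
    (hν0 : 0 < ν) (hν1 : ν ≤ 1)
    (hstar : ∀ b, ∑ i, ℓ (x i + astar * w i) ≤ ∑ i, ℓ (x i + b * w i))
    (ha1 : ν * (γ / C ^ 4) ≤ a) (ha2 : a ≤ ν * astar) :
    ∑ i, ℓ (x i + a * w i) ≤
      (∑ i, ℓ (x i)) * (1 - ν * (2 - ν) / (2 * C ^ 6) * γ ^ 2) := by
  obtain ⟨hC1, hCb⟩ := hC
  have hCpos : 0 < C := by linarith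
  set S := ∑ i, ℓ (x i) with hS
  set G := ∑ i, deriv ℓ (x i) with hG
  set F : ℝ → ℝ := fun b => ∑ i, ℓ (x i + b * w i) with hF
  set q := ν * (γ / C ^ 4) with hq
  have hq0 : 0 ≤ q := by positivity
  have hast : 0 ≤ astar := by
    by_contra hneg
    push Not at hneg
    have : ν * astar < 0 := mul_neg_of_pos_of_neg hν0 hneg
    linarith
  have hνa : ν * astar ≤ astar := by nlinarith
  have hF0 : F 0 = S := by simp [hF, hS]
  have hd1 : ∀ b, HasDerivAt F (∑ i, deriv ℓ (x i + b * w i) * w i) b := by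
    intro b
    refine HasDerivAt.fun_sum (fun i _ => ?_)
    have h := ((hasDerivAt_id b).mul_const (w i)).const_add (x i)
    simp only [one_mul, id] at h
    exact (rc_hasDeriv hℓ _).comp b h
  have hd2 : ∀ b, HasDerivAt (fun b => ∑ i, deriv ℓ (x i + b * w i) * w i)
      (∑ i, iteratedDeriv 2 ℓ (x i + b * w i) * w i * w i) b := by
    intro b
    refine HasDerivAt.fun_sum (fun i _ => ?_)
    have h := ((hasDerivAt_id b).mul_const (w i)).const_add (x i)
    simp only [one_mul, id] at h
    exact ((rc_hasDeriv2 hℓ _).comp b h).mul_const (w i)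
  have hconv : ConvexOn ℝ Set.univ F := by
    refine ⟨convex_univ, fun b _ c _ s t hs ht hst => ?_⟩
    simp only [hF, smul_eq_mul, Finset.mul_sum]
    rw [← Finset.sum_add_distrib]
    refine Finset.sum_le_sum (fun i _ => ?_)
    have h := hℓ.2.2.1.convexOn.2 (Set.mem_univ (x i + b * w i))
      (Set.mem_univ (x i + c * w i)) hs ht hst
    simp only [smul_eq_mul] at h
    convert h using 2
    linear_combination (-(x i)) * hst
  -- `F` decreases on `[0, astar]`
  have hanti : ∀ b c, b ≤ c → c ≤ astar → F c ≤ F b := by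
    intro b c hbc hc
    rcases eq_or_lt_of_le hc with rfl | hc'
    · exact hstar b
    rcases eq_or_lt_of_le hbc with rfl | hbc'
    · exact le_rfl
    have h := hconv.slope_mono_adjacent (Set.mem_univ b) (Set.mem_univ astar) hbc' hc'
    have hn : (F astar - F c) / (astar - c) ≤ 0 :=
      div_nonpos_of_nonpos_of_nonneg (by linarith [hstar c]) (by linarith)
    have h3 := h.trans hn
    rw [div_le_iff₀ (by linarith)] at h3
    linarith
  have hqa : q ≤ astar := by linarith
  have hstep1 : F a ≤ F q := hanti q a ha1 (by linarith)
  -- pointwise bounds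
  have hle : ∀ b, 0 ≤ b → b ≤ astar → ∀ i, x i + b * w i ≤ z := by
    intro b hb hb' i
    rw [← (rc_strictMono hℓ).le_iff_le, hz, ← hF0]
    refine le_trans ?_ (hanti 0 b hb hb')
    exact Finset.single_le_sum (f := fun i => ℓ (x i + b * w i))
      (fun j _ => (hℓ.1 _).le) (Finset.mem_univ i)
  have hup : ∀ y ≤ z, ∀ i ≤ 2, iteratedDeriv i ℓ y ≤ C * Real.exp y := by
    intro y hy i hi
    have h := (hCb y hy i hi).1
    rw [le_div_iff₀ (rc_pos hℓ y i hi)] at h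
    have := mul_le_mul_of_nonneg_left h hCpos.le
    rwa [← mul_assoc, mul_inv_cancel₀ hCpos.ne', one_mul] at this
  have hlo : ∀ y ≤ z, ∀ i ≤ 2, Real.exp y ≤ C * iteratedDeriv i ℓ y := by
    intro y hy i hi
    have h := (hCb y hy i hi).2
    rwa [div_le_iff₀ (rc_pos hℓ y i hi)] at h
  have h20 : ∀ y ≤ z, iteratedDeriv 2 ℓ y ≤ C ^ 2 * ℓ y := by
    intro y hy
    have e1 := hup y hy 2 le_rfl
    have e2 := hlo y hy 0 (by norm_num)
    rw [iteratedDeriv_zero] at e2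
    nlinarith
  have h01 : ∀ y ≤ z, ℓ y ≤ C ^ 2 * deriv ℓ y := by
    intro y hy
    have e1 := hup y hy 0 (by norm_num)
    have e2 := hlo y hy 1 (by norm_num)
    rw [iteratedDeriv_zero] at e1
    rw [iteratedDeriv_one] at e2
    nlinarith
  have hSG : S ≤ C ^ 2 * G := by
    rw [hS, hG, Finset.mul_sum]
    refine Finset.sum_le_sum (fun i _ => h01 _ ?_)
    have := hle 0 le_rfl hast i
    simpa using this
  have hK : ∀ b, 0 ≤ b → b ≤ q →
      ∑ i, iteratedDeriv 2 ℓ (x i + b * w i) * w i * w i ≤ C ^ 4 * G := by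
    intro b hb hbq
    have hba : b ≤ astar := hbq.trans hqa
    calc ∑ i, iteratedDeriv 2 ℓ (x i + b * w i) * w i * w i
        ≤ ∑ i, C ^ 2 * ℓ (x i + b * w i) := by
          refine Finset.sum_le_sum (fun i _ => ?_)
          have hp := rc_pos hℓ (x i + b * w i) 2 le_rfl
          have hw2 : w i * w i ≤ 1 := by
            have := abs_le.mp (hw i)
            nlinarith
          have e := h20 _ (hle b hb hba i)
          nlinarith
      _ = C ^ 2 * F b := by rw [Finset.mul_sum]
      _ ≤ C ^ 2 * S := by
          have := hanti 0 b hb hba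
          rw [hF0] at this
          gcongr
      _ ≤ C ^ 2 * (C ^ 2 * G) := by gcongr
      _ = C ^ 4 * G := by ring
  have ht := rc_taylor F _ _ (C ^ 4 * G) q hq0 hd1 hd2 hK
  simp only [zero_mul, add_zero] at ht
  rw [hD, hF0] at ht
  refine hstep1.trans (ht.trans ?_)
  have e1 : S + q * -(γ * G) + C ^ 4 * G * q ^ 2 / 2
      = S - ν * (2 - ν) / (2 * C ^ 6) * γ ^ 2 * (C ^ 2 * G) := by
    rw [hq]; field_simp; ring
  rw [e1]
  have hc : 0 ≤ ν * (2 - ν) / (2 * C ^ 6) * γ ^ 2 := by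
    have : 0 ≤ 2 - ν := by linarith
    positivity
  nlinarith [mul_le_mul_of_nonneg_left hSG hc]

lemma rc_invFun {m n : ℕ} (hm : 0 < m) {ℓ : ℝ → ℝ} (hℓ : MemL ℓ)
    (A : Matrix (Fin m) (Fin n) ℝ) (l : Fin n → ℝ) :
    ℓ (Function.invFun ℓ ((m : ℝ) * LL ℓ A l)) = ∑ i, ℓ (A.mulVec l i) := by
  have hm' : (m : ℝ) ≠ 0 := by positivity
  have e : (m : ℝ) * LL ℓ A l = ∑ i, ℓ (A.mulVec l i) := by
    rw [LL]; field_simp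
  rw [e]
  apply Function.invFun_eq
  apply rc_surj hℓ
  have : Nonempty (Fin m) := ⟨⟨0, hm⟩⟩
  exact Finset.sum_pos (fun i _ => hℓ.1 _) Finset.univ_nonempty

lemma rc_Cstep_mono {m n : ℕ} (hm : 0 < m) {ℓ : ℝ → ℝ} (hℓ : MemL ℓ)
    (A : Matrix (Fin m) (Fin n) ℝ) (l l' : Fin n → ℝ) (h : LL ℓ A l ≤ LL ℓ A l') :
    Cstep ℓ A l ≤ Cstep ℓ A l' := by
  apply rc_Cconst_mono hℓ
  rw [← (rc_strictMono hℓ).le_iff_le, rc_invFun hm hℓ, rc_invFun hm hℓ]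
  have hm' : (0 : ℝ) < m := by positivity
  rw [LL, LL] at h
  exact (div_le_div_iff_of_pos_right hm').mp h

lemma rc_step {m n : ℕ} (hm : 0 < m)
    (A : Matrix (Fin m) (Fin n) ℝ) (hA : ∀ i j, |A i j| ≤ 1)
    (ℓ : ℝ → ℝ) (hℓ : MemL ℓ) (ν : ℝ) (hν : ν ∈ Set.Ioc (0:ℝ) 1)
    (l v : Fin n → ℝ) (a astar : ℝ)
    (hv : ∃ s : ℝ, (s = 1 ∨ s = -1) ∧ ∃ j : Fin n, v = s • (Pi.single j (1:ℝ) : Fin n → ℝ))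
    (hg : ∑ i, gradL ℓ A l i * A.mulVec v i = - gInf ℓ A l)
    (hstar : ∀ β : ℝ, LL ℓ A (l + astar • v) ≤ LL ℓ A (l + β • v))
    (h1 : ν * (gammaHat ℓ A l / (Cstep ℓ A l)^4) ≤ a) (h2 : a ≤ ν * astar) :
    LL ℓ A (l + a • v) ≤ LL ℓ A l *
      (1 - ν * (2 - ν) / (2 * (Cstep ℓ A l)^6) * (gammaHat ℓ A l)^2) := by
  have hm' : (0 : ℝ) < m := by positivity
  have : Nonempty (Fin m) := ⟨⟨0, hm⟩⟩
  have hmv : ∀ b : ℝ, ∀ i, A.mulVec (l + b • v) i = A.mulVec l i + b * A.mulVec v i := by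
    intro b i
    simp [Matrix.mulVec_add, Matrix.mulVec_smul]
  have hw : ∀ i, |A.mulVec v i| ≤ 1 := by
    intro i
    obtain ⟨s, hs, j, rfl⟩ := hv
    have e : A.mulVec (s • (Pi.single j (1:ℝ) : Fin n → ℝ)) i = s * A i j := by
      simp [Matrix.mulVec_smul]
    rw [e, abs_mul]
    rcases hs with rfl | rfl <;> simpa using hA i j
  have hG : 0 < ∑ i, deriv ℓ (A.mulVec l i) :=
    Finset.sum_pos (fun i _ => rc_deriv_pos hℓ _) Finset.univ_nonempty
  have hgO : gOne ℓ A l = (∑ i, deriv ℓ (A.mulVec l i)) / m := by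
    rw [gOne, Finset.sum_div]
    refine Finset.sum_congr rfl (fun i _ => ?_)
    exact abs_of_pos (div_pos (rc_deriv_pos hℓ _) hm')
  have hgI : 0 ≤ gInf ℓ A l := Real.iSup_nonneg (fun j => abs_nonneg _)
  have hγ : 0 ≤ gammaHat ℓ A l := div_nonneg hgI (by rw [hgO]; positivity)
  have hgI2 : gInf ℓ A l = gammaHat ℓ A l * ((∑ i, deriv ℓ (A.mulVec l i)) / m) := by
    rw [gammaHat, hgO]; field_simp
  have hD : ∑ i, deriv ℓ (A.mulVec l i) * A.mulVec v i
      = -(gammaHat ℓ A l * ∑ i, deriv ℓ (A.mulVec l i)) := by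
    have e : ∑ i, gradL ℓ A l i * A.mulVec v i
        = (∑ i, deriv ℓ (A.mulVec l i) * A.mulVec v i) / m := by
      rw [Finset.sum_div]
      refine Finset.sum_congr rfl (fun i _ => ?_)
      rw [gradL]; ring
    rw [e, hgI2] at hg
    field_simp at hg
    linarith
  have hcore := rc_core hℓ (A.mulVec l) (A.mulVec v) hw
    (Function.invFun ℓ ((m : ℝ) * LL ℓ A l)) (Cstep ℓ A l) (gammaHat ℓ A l) ν a astar
    (rc_Cconst hℓ _) (rc_invFun hm hℓ A l) hγ hD hν.1 hν.2
    (by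
      intro b
      have h := hstar b
      rw [LL, LL, div_le_div_iff_of_pos_right hm'] at h
      simpa only [hmv] using h) h1 h2
  have e : LL ℓ A (l + a • v) = (∑ i, ℓ (A.mulVec l i + a * A.mulVec v i)) / m := by
    simp only [LL, hmv]
  have e' : LL ℓ A l = (∑ i, ℓ (A.mulVec l i)) / m := rfl
  rw [e]
  rw [e', div_mul_eq_mul_div]
  exact (div_le_div_iff_of_pos_right hm').mpr hcore

/-- risk convergence for steps between the quadratic-upper-bound step
and the shrunk optimal step. -/
theorem risk_conv_qub_opt {m n : ℕ} (hm : 0 < m) (hn : 0 < n)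
    (A : Matrix (Fin m) (Fin n) ℝ) (hA : ∀ i j, |A i j| ≤ 1)
    (ℓ : ℝ → ℝ) (hℓ : MemL ℓ)
    (ν : ℝ) (hν : ν ∈ Set.Ioc (0:ℝ) 1)
    (lam : ℕ → Fin n → ℝ) (α : ℕ → ℝ) (v : ℕ → Fin n → ℝ)
    (hseq : IsBoostSeq ℓ A lam α v)
    (αstar : ℕ → ℝ)
    (hαstar : ∀ i : ℕ, 1 ≤ i → ∀ β : ℝ,
      LL ℓ A (lam (i-1) + αstar i • v i) ≤ LL ℓ A (lam (i-1) + β • v i))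
    (hstep : ∀ i : ℕ, 1 ≤ i →
      ν * (gammaHat ℓ A (lam (i-1)) / (Cstep ℓ A (lam (i-1)))^4) ≤ α i ∧
      α i ≤ ν * αstar i)
    (t₀ t : ℕ) (ht : t₀ < t) :
    LL ℓ A (lam t) ≤ LL ℓ A (lam t₀) *
      Real.exp (-(ν * (2-ν) / (2 * (Cstep ℓ A (lam t₀))^6)) *
        ∑ i ∈ Finset.Icc (t₀+1) t, (gammaHat ℓ A (lam (i-1)))^2) := by
  obtain ⟨-, hrec, hv, hg⟩ := hseq
  have hm' : (0 : ℝ) < m := by positivity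
  have hLpos : ∀ l, 0 ≤ LL ℓ A l := fun l =>
    div_nonneg (Finset.sum_nonneg (fun i _ => (hℓ.1 _).le)) hm'.le
  have hCs : ∀ l, 1 ≤ Cstep ℓ A l := fun l => (rc_Cconst hℓ _).1
  have hν2 : 0 ≤ ν * (2 - ν) := mul_nonneg hν.1.le (by linarith [hν.2])
  have hone : ∀ k : ℕ, LL ℓ A (lam (k + 1)) ≤ LL ℓ A (lam k) *
      Real.exp (-(ν * (2-ν) / (2 * (Cstep ℓ A (lam k))^6)) * (gammaHat ℓ A (lam k))^2) := by
    intro k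
    have hk : 1 ≤ k + 1 := by omega
    have hr := hrec (k+1) hk
    have hg' := hg (k+1) hk
    have ha' := hαstar (k+1) hk
    have hs' := hstep (k+1) hk
    rw [Nat.add_sub_cancel] at hr hg' hs'
    simp only [Nat.add_sub_cancel] at ha'
    have h := rc_step hm A hA ℓ hℓ ν hν (lam k) (v (k+1)) (α (k+1)) (αstar (k+1))
      (hv _ hk) hg' ha' hs'.1 hs'.2
    rw [hr]
    refine h.trans (mul_le_mul_of_nonneg_left ?_ (hLpos _))
    have := Real.add_one_le_exp
      (-(ν * (2-ν) / (2 * (Cstep ℓ A (lam k))^6)) * (gammaHat ℓ A (lam k))^2)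
    linarith
  have hanti : Antitone (fun k => LL ℓ A (lam k)) := by
    apply antitone_nat_of_succ_le
    intro k
    refine (hone k).trans (mul_le_of_le_one_right (hLpos _) ?_)
    rw [Real.exp_le_one_iff, neg_mul, neg_nonpos]
    have := hCs (lam k)
    positivity
  have hmain : ∀ k : ℕ, t₀ ≤ k → LL ℓ A (lam k) ≤ LL ℓ A (lam t₀) *
      Real.exp (-(ν * (2-ν) / (2 * (Cstep ℓ A (lam t₀))^6)) *
        ∑ i ∈ Finset.Icc (t₀+1) k, (gammaHat ℓ A (lam (i-1)))^2) := by
    intro k hk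
    induction k, hk using Nat.le_induction with
    | base => simp
    | succ k hk ih =>
      rw [Finset.sum_Icc_succ_top (by omega), mul_add, Real.exp_add, ← mul_assoc,
        Nat.add_sub_cancel]
      refine (hone k).trans (mul_le_mul ih ?_ (Real.exp_pos _).le
        (mul_nonneg (hLpos _) (Real.exp_pos _).le))
      rw [Real.exp_le_exp, neg_mul, neg_mul, neg_le_neg_iff]
      have hc := rc_Cstep_mono hm hℓ A _ _ (hanti hk)
      have h1 := hCs (lam k)
      gcongr
  exact hmain t ht.le
end
end

section
/- Let ℓ = exp (so that C_t = 1 for all t), let ν ∈ (0,1], assume γ_i < 1 for every i ≥ 1, and let {λ_t} be boosting iterates with the AdaBoost steps α_i = α_ada_i := (ν/2)·ln((1+γ_i)/(1−γ_i)). Then for all integers t > t₀ ≥ 0: L(Aλ_t) ≤ L(Aλ_{t₀})·Π_{i=t₀+1}^{t} (1 − (ν/2)·γ_i²). -/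
open Real Finset

noncomputable section

variable {m n : ℕ}

theorem aux_exp_convex (p x y : ℝ) (hp : 0 ≤ p) (hp1 : p ≤ 1) :
    Real.exp (p * x + (1 - p) * y) ≤ p * Real.exp x + (1 - p) * Real.exp y := by
  have h := convexOn_exp.2 (Set.mem_univ x) (Set.mem_univ y) hp (sub_nonneg.2 hp1) (by ring)
  simpa [smul_eq_mul] using h

theorem aux_scalar (ν g : ℝ) (hν0 : 0 < ν) (hν1 : ν ≤ 1) (hg0 : 0 ≤ g) (hg1 : g < 1) :
    (1 - g) / 2 * Real.exp ((ν/2) * Real.log ((1 + g) / (1 - g)))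
      + (1 + g) / 2 * Real.exp (-((ν/2) * Real.log ((1 + g) / (1 - g))))
      ≤ 1 - (ν/2) * g^2 := by
  have hpos : 0 < (1 + g) / (1 - g) := div_pos (by linarith) (by linarith)
  obtain ⟨c, hc⟩ : ∃ c, c = Real.log ((1 + g) / (1 - g)) / 2 := ⟨_, rfl⟩
  have h1 := aux_exp_convex ν c 0 hν0.le hν1
  have h2 := aux_exp_convex ν (-c) 0 hν0.le hν1
  have e1 : (ν/2) * Real.log ((1 + g) / (1 - g)) = ν * c + (1 - ν) * 0 := by rw [hc]; ring
  have e2 : -(ν * c + (1 - ν) * 0) = ν * (-c) + (1 - ν) * 0 := by ring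
  rw [e1, e2]
  rw [Real.exp_zero] at h1 h2
  have hu : Real.exp c * Real.exp c = (1 + g) / (1 - g) := by
    rw [← Real.exp_add, hc, add_halves, Real.exp_log hpos]
  have huv : Real.exp c * Real.exp (-c) = 1 := by rw [← Real.exp_add]; simp
  have hup := Real.exp_pos c
  have hvp := Real.exp_pos (-c)
  generalize Real.exp c = u at *
  generalize Real.exp (-c) = w at *
  have hg : 0 < 1 - g := by linarith
  have hu' : (1 - g) * u ^ 2 = 1 + g := by
    rw [sq, hu]; field_simp
  have hq : (1 + g) * w = (1 - g) * u := by
    rw [← hu']; linear_combination (1 - g) * u * huv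
  have hs2 : ((1 - g) * u) ^ 2 = 1 - g ^ 2 := by linear_combination (1 - g) * hu'
  have hs : (1 - g) * u ≤ 1 - g ^ 2 / 2 := by
    refine (abs_le_of_sq_le_sq' ?_ ?_).2
    · rw [hs2]; nlinarith [sq_nonneg (g ^ 2)]
    · nlinarith
  have k1 := mul_le_mul_of_nonneg_left h1 (by linarith : 0 ≤ (1 - g) / 2)
  have k2 := mul_le_mul_of_nonneg_left h2 (by linarith : 0 ≤ (1 + g) / 2)
  have k3 := mul_le_mul_of_nonneg_left hs hν0.le
  have k4 : ν * ((1 + g) * w) = ν * ((1 - g) * u) := by rw [hq]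
  nlinarith

theorem aux_step {m n : ℕ} (hm : 0 < m)
    (A : Matrix (Fin m) (Fin n) ℝ) (hA : ∀ i j, |A i j| ≤ 1)
    (ν : ℝ) (hν0 : 0 < ν) (hν1 : ν ≤ 1) (x y v : Fin n → ℝ) (a : ℝ)
    (hy : y = x + a • v)
    (hv : ∃ s : ℝ, (s = 1 ∨ s = -1) ∧ ∃ j : Fin n, v = s • (Pi.single j (1:ℝ) : Fin n → ℝ))
    (hgr : ∑ i, gradL Real.exp A x i * A.mulVec v i = - gInf Real.exp A x)
    (hγ : gammaHat Real.exp A x < 1)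
    (ha : a = (ν/2) * Real.log
        ((1 + gammaHat Real.exp A x) / (1 - gammaHat Real.exp A x))) :
    LL Real.exp A y ≤ LL Real.exp A x * (1 - (ν/2) * (gammaHat Real.exp A x)^2) := by
  have hmR : (0:ℝ) < m := by exact_mod_cast hm
  haveI : Nonempty (Fin m) := ⟨⟨0, hm⟩⟩
  have hone : gOne Real.exp A x = LL Real.exp A x := by
    unfold gOne LL gradL
    rw [Finset.sum_div]
    refine Finset.sum_congr rfl fun i _ => ?_
    rw [Real.deriv_exp, abs_of_pos (div_pos (Real.exp_pos _) hmR)]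
  have hLpos : 0 < LL Real.exp A x :=
    div_pos (Finset.sum_pos (fun i _ => Real.exp_pos _) Finset.univ_nonempty) hmR
  have hInf : gInf Real.exp A x = gammaHat Real.exp A x * LL Real.exp A x := by
    unfold gammaHat; rw [hone]; field_simp
  have hg0 : 0 ≤ gammaHat Real.exp A x := by
    unfold gammaHat; rw [hone]
    exact div_nonneg (Real.iSup_nonneg fun j => abs_nonneg _) hLpos.le
  have hb : ∀ i, |A.mulVec v i| ≤ 1 := by
    obtain ⟨s, hs, j, rfl⟩ := hv
    intro i
    have := hA i j
    rw [Matrix.mulVec_smul]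
    rcases hs with rfl | rfl <;> simpa using this
  have hsc := aux_scalar ν _ hν0 hν1 hg0 hγ
  rw [← ha] at hsc
  have key : LL Real.exp A y ≤ ∑ i, gradL Real.exp A x i *
      ((1 + A.mulVec v i) / 2 * Real.exp a + (1 - A.mulVec v i) / 2 * Real.exp (-a)) := by
    unfold LL gradL
    rw [Finset.sum_div]
    refine Finset.sum_le_sum fun i _ => ?_
    obtain ⟨l, r⟩ := abs_le.1 (hb i)
    have h := aux_exp_convex ((1 + A.mulVec v i) / 2) a (-a) (by linarith) (by linarith)
    have e : (1 + A.mulVec v i) / 2 * a + (1 - (1 + A.mulVec v i) / 2) * (-a)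
      = a * A.mulVec v i := by ring
    rw [e] at h
    have e3 : 1 - (1 + A.mulVec v i) / 2 = (1 - A.mulVec v i) / 2 := by ring
    rw [e3] at h
    have e2 : A.mulVec y i = A.mulVec x i + a * A.mulVec v i := by
      rw [hy, Matrix.mulVec_add, Matrix.mulVec_smul]; simp
    rw [e2, Real.exp_add, Real.deriv_exp, mul_div_right_comm]
    exact mul_le_mul_of_nonneg_left h (div_pos (Real.exp_pos _) hmR).le
  have hsum : ∑ i, gradL Real.exp A x i = LL Real.exp A x := by
    unfold LL gradL
    rw [Finset.sum_div]; simp only [Real.deriv_exp]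
  have e4 : ∑ i, gradL Real.exp A x i *
      ((1 + A.mulVec v i) / 2 * Real.exp a + (1 - A.mulVec v i) / 2 * Real.exp (-a))
      = (∑ i, gradL Real.exp A x i) * ((Real.exp a + Real.exp (-a)) / 2)
      + (∑ i, gradL Real.exp A x i * A.mulVec v i) * ((Real.exp a - Real.exp (-a)) / 2) := by
    rw [Finset.sum_mul, Finset.sum_mul, ← Finset.sum_add_distrib]
    refine Finset.sum_congr rfl fun i _ => ?_
    ring
  rw [e4, hsum, hgr, hInf] at key
  refine key.trans (le_trans (le_of_eq ?_) (mul_le_mul_of_nonneg_left hsc hLpos.le))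
  ring

/-- risk convergence for AdaBoost steps with the exponential loss. -/
theorem risk_conv_ada_exp {m n : ℕ} (hm : 0 < m) (hn : 0 < n)
    (A : Matrix (Fin m) (Fin n) ℝ) (hA : ∀ i j, |A i j| ≤ 1)
    (ν : ℝ) (hν : ν ∈ Set.Ioc (0:ℝ) 1)
    (lam : ℕ → Fin n → ℝ) (α : ℕ → ℝ) (v : ℕ → Fin n → ℝ)
    (hseq : IsBoostSeq Real.exp A lam α v)
    (hγ : ∀ i : ℕ, 1 ≤ i → gammaHat Real.exp A (lam (i-1)) < 1)
    (hstep : ∀ i : ℕ, 1 ≤ i →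
      α i = (ν/2) * Real.log
        ((1 + gammaHat Real.exp A (lam (i-1))) / (1 - gammaHat Real.exp A (lam (i-1)))))
    (t₀ t : ℕ) (ht : t₀ < t) :
    LL Real.exp A (lam t) ≤ LL Real.exp A (lam t₀) *
      ∏ i ∈ Finset.Icc (t₀+1) t, (1 - (ν/2) * (gammaHat Real.exp A (lam (i-1)))^2) := by
  obtain ⟨_, h2, h3, h4⟩ := hseq
  have st : ∀ i : ℕ, 1 ≤ i → LL Real.exp A (lam i) ≤ LL Real.exp A (lam (i-1)) *
      (1 - (ν/2) * (gammaHat Real.exp A (lam (i-1)))^2) := fun i hi =>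
    aux_step hm A hA ν hν.1 hν.2 _ _ _ _ (h2 i hi) (h3 i hi) (h4 i hi) (hγ i hi) (hstep i hi)
  have hL : ∀ x : Fin n → ℝ, 0 < LL Real.exp A x := fun x =>
    haveI : Nonempty (Fin m) := ⟨⟨0, hm⟩⟩
    div_pos (Finset.sum_pos (fun i _ => Real.exp_pos _) Finset.univ_nonempty)
      (by exact_mod_cast hm)
  have main : ∀ t, t₀ ≤ t → LL Real.exp A (lam t) ≤ LL Real.exp A (lam t₀) *
      ∏ i ∈ Finset.Icc (t₀+1) t, (1 - (ν/2) * (gammaHat Real.exp A (lam (i-1)))^2) := by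
    intro t ht
    induction t, ht using Nat.le_induction with
    | base => simp
    | succ k hk ih =>
      rw [Finset.prod_Icc_succ_top (by omega), ← mul_assoc]
      have h := st (k+1) (by omega)
      have hf := (pos_of_mul_pos_right ((hL (lam (k+1))).trans_le h) (hL _).le).le
      rw [Nat.add_sub_cancel] at h hf ⊢
      exact h.trans (mul_le_mul_of_nonneg_right ih hf)
  exact main t ht.le
end
end

section
/- Let ℓ ∈ 𝕃_∞, ν ∈ (0,1], suppose γ := max_{‖λ‖₁=1} min_i (−(Aλ)_i) > 0, and let {λ_t} be boosting iterates with steps α_i = α_qub_i := ν·γ_i/C_i⁴. Let t > t₀ ≥ 0 with t ≥ 2C₁⁶·ln(m)/(γ²·ν(2−ν)). Then the margin satisfies M(Aλ_t) := min_{k∈[m]} (−(Aλ_t)_k)/‖λ_t‖₁ ≥ γ·(2−ν)/(2·C_{t₀+1}⁶) − ln(c₀)/(t·ν·γ), where c₀ := max{1, m·C_{t₀+1}·L(Aλ_{t₀})·exp((ν(2−ν)/(2·C_{t₀+1}⁶))·Σ_{i=1}^{t₀} γ_i²)}. -/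
open Real Finset

noncomputable section

variable {m n : ℕ}

lemma CBound.bounds {ℓ : ℝ → ℝ} {z C : ℝ} (h : CBound ℓ z C) {x : ℝ} (hx : x ≤ z) {i : ℕ}
    (hi : i ≤ 2) : 0 < iteratedDeriv i ℓ x ∧ Real.exp x ≤ C * iteratedDeriv i ℓ x ∧
      iteratedDeriv i ℓ x ≤ C * Real.exp x := by
  obtain ⟨h1, h2⟩ := h
  obtain ⟨ha, hb⟩ := h2 x hx i hi
  have hC : 0 < C := by linarith
  have hq : 0 < Real.exp x / iteratedDeriv i ℓ x := lt_of_lt_of_le (inv_pos.2 hC) ha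
  have hp : 0 < iteratedDeriv i ℓ x := by
    by_contra hcon
    push Not at hcon
    exact absurd (div_nonpos_of_nonneg_of_nonpos (Real.exp_pos x).le hcon) (by linarith)
  refine ⟨hp, (div_le_iff₀ hp).1 hb, ?_⟩
  rw [le_div_iff₀ hp, inv_mul_le_iff₀ hC] at ha
  exact ha

lemma MemL.pos {ℓ : ℝ → ℝ} (h : MemL ℓ) (x : ℝ) {i : ℕ} (hi : i ≤ 2) :
    0 < iteratedDeriv i ℓ x := by
  obtain ⟨C, hC⟩ := h.2.2.2 x
  exact (hC.bounds le_rfl hi).1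

lemma Cconst_le {ℓ : ℝ → ℝ} {z C : ℝ} (h : CBound ℓ z C) : Cconst ℓ z ≤ C :=
  csInf_le ⟨1, fun _ hc => hc.1⟩ h

lemma MemL.cbound {ℓ : ℝ → ℝ} (h : MemL ℓ) (z : ℝ) : CBound ℓ z (Cconst ℓ z) := by
  have hne : {C : ℝ | CBound ℓ z C}.Nonempty := h.2.2.2 z
  have h1 : 1 ≤ Cconst ℓ z := le_csInf hne fun _ hc => hc.1
  refine ⟨h1, fun x hx i hi => ?_⟩
  have hp := h.pos x hi
  have hq : 0 < Real.exp x / iteratedDeriv i ℓ x := div_pos (Real.exp_pos x) hp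
  constructor
  · rw [inv_le_comm₀ (by linarith) hq]
    refine le_csInf hne fun C hc => ?_
    rw [inv_le_comm₀ hq (by linarith [hc.1])]
    exact (hc.2 x hx i hi).1
  · exact le_csInf hne fun C hc => (hc.2 x hx i hi).2

lemma MemL.cconst_mono {ℓ : ℝ → ℝ} (h : MemL ℓ) {z z' : ℝ} (hz : z ≤ z') :
    Cconst ℓ z ≤ Cconst ℓ z' := by
  have := h.cbound z'
  exact Cconst_le ⟨this.1, fun x hx => this.2 x (hx.trans hz)⟩

lemma MemL.strictMono {ℓ : ℝ → ℝ} (h : MemL ℓ) : StrictMono ℓ := by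
  apply strictMono_of_deriv_pos
  intro x
  have := h.pos x (i := 1) (by norm_num)
  rwa [iteratedDeriv_one] at this

lemma MemL.exists_eq {ℓ : ℝ → ℝ} (h : MemL ℓ) {y : ℝ} (hy : 0 < y) : ∃ x, ℓ x = y := by
  have hcont : Continuous ℓ := h.2.1.continuous
  obtain ⟨C, hC⟩ := h.2.2.2 0
  have hC0 : 0 < C := by linarith [hC.1]
  have hlow : ∃ a, ℓ a ≤ y := by
    refine ⟨min 0 (Real.log (y / C)), ?_⟩
    have h1 := (hC.bounds (min_le_left 0 (Real.log (y / C))) (i := 0) (by norm_num)).2.2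
    rw [iteratedDeriv_zero] at h1
    refine h1.trans ?_
    have h2 : Real.exp (min 0 (Real.log (y / C))) ≤ y / C := by
      calc _ ≤ Real.exp (Real.log (y / C)) := Real.exp_le_exp.2 (min_le_right _ _)
        _ = _ := Real.exp_log (div_pos hy hC0)
    calc C * _ ≤ C * (y / C) := by gcongr
      _ = y := by field_simp
  have hup : ∃ b, y ≤ ℓ b := by
    have hd : 0 < ℓ 0 - ℓ (-1) := sub_pos.2 (h.strictMono (by norm_num))
    set d := ℓ 0 - ℓ (-1) with hdd
    refine ⟨y / d, ?_⟩
    have hx : 0 < y / d := div_pos hy hd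
    have hxd : y / d * d = y := by field_simp
    set x := y / d
    have hcv : ConvexOn ℝ Set.univ ℓ := h.2.2.1.convexOn
    have hc := hcv.2 (Set.mem_univ (-1 : ℝ)) (Set.mem_univ x)
      (show 0 ≤ x / (x + 1) by positivity) (show 0 ≤ 1 / (x + 1) by positivity) (by field_simp)
    have e : (x / (x + 1)) • (-1 : ℝ) + (1 / (x + 1)) • x = 0 := by
      simp only [smul_eq_mul]; field_simp; ring
    rw [e] at hc
    simp only [smul_eq_mul] at hc
    have e2 : x / (x + 1) * ℓ (-1) + 1 / (x + 1) * ℓ x = (x * ℓ (-1) + ℓ x) / (x + 1) := by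
      field_simp
    rw [e2, le_div_iff₀ (by positivity)] at hc
    have := h.1 0
    nlinarith
  obtain ⟨a, ha⟩ := hlow
  obtain ⟨b, hb⟩ := hup
  obtain ⟨c, hc⟩ := mem_range_of_exists_le_of_exists_ge hcont ⟨a, ha⟩ ⟨b, hb⟩
  exact ⟨c, hc⟩

lemma MemL.invFun_eq {ℓ : ℝ → ℝ} (h : MemL ℓ) {y : ℝ} (hy : 0 < y) :
    ℓ (Function.invFun ℓ y) = y := Function.invFun_eq (h.exists_eq hy)

lemma taylor_upper {f f' f'' : ℝ → ℝ} {K s : ℝ} (hs : 0 ≤ s)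
    (h1 : ∀ u, HasDerivAt f (f' u) u) (h2 : ∀ u, HasDerivAt f' (f'' u) u)
    (hK : ∀ u ∈ Set.Icc 0 s, f'' u ≤ K) : f s ≤ f 0 + f' 0 * s + K * s ^ 2 / 2 := by
  have A1 : ∀ u ∈ Set.Icc 0 s, f' u ≤ f' 0 + K * u := by
    intro u hu
    refine image_le_of_deriv_right_le_deriv_boundary (f := f') (f' := f'')
      (B := fun u => f' 0 + K * u) (B' := fun _ => K) (a := 0) (b := s)
      (fun x _ => (h2 x).continuousAt.continuousWithinAt)
      (fun x _ => (h2 x).hasDerivWithinAt) (by simp) (by fun_prop) (fun x _ => ?_)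
      (fun x hx => hK x ⟨hx.1, hx.2.le⟩) hu
    have : HasDerivAt (fun u => f' 0 + K * u) K x := by
      simpa using ((hasDerivAt_id x).const_mul K).const_add (f' 0)
    exact this.hasDerivWithinAt
  refine image_le_of_deriv_right_le_deriv_boundary (f := f) (f' := f')
      (B := fun u => f 0 + f' 0 * u + K * u ^ 2 / 2) (B' := fun u => f' 0 + K * u) (a := 0) (b := s)
      (fun x _ => (h1 x).continuousAt.continuousWithinAt)
      (fun x _ => (h1 x).hasDerivWithinAt) (by simp) (by fun_prop) (fun x _ => ?_)
      (fun x hx => A1 x ⟨hx.1, hx.2.le⟩) ⟨hs, le_rfl⟩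
  have : HasDerivAt (fun u => f 0 + f' 0 * u + K * u ^ 2 / 2) (f' 0 + K * x) x := by
    have e1 := ((hasDerivAt_id x).const_mul (f' 0)).const_add (f 0)
    have e2 := (((hasDerivAt_id x).pow 2).const_mul K).div_const 2
    refine (e1.add e2).congr_deriv ?_
    simp
    ring
  exact this.hasDerivWithinAt

lemma MemL.hasDerivAt0 {ℓ : ℝ → ℝ} (h : MemL ℓ) (x : ℝ) : HasDerivAt ℓ (deriv ℓ x) x :=
  (h.2.1.differentiable (by norm_num) x).hasDerivAt

lemma MemL.hasDerivAt1 {ℓ : ℝ → ℝ} (h : MemL ℓ) (x : ℝ) :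
    HasDerivAt (deriv ℓ) (iteratedDeriv 2 ℓ x) x := by
  have h1 : Differentiable ℝ (iteratedDeriv 1 ℓ) :=
    h.2.1.differentiable_iteratedDeriv 1 (by norm_num)
  rw [iteratedDeriv_one] at h1
  have := (h1 x).hasDerivAt
  rwa [show deriv (deriv ℓ) x = iteratedDeriv 2 ℓ x by
    rw [iteratedDeriv_succ, iteratedDeriv_one]] at this

lemma qub_step {ι : Type*} [Fintype ι] [Nonempty ι] {ℓ : ℝ → ℝ} (h : MemL ℓ) (x w : ι → ℝ)
    (hw : ∀ i, |w i| ≤ 1) {z C g ν : ℝ} (hz : ℓ z = ∑ i, ℓ (x i)) (hC : CBound ℓ z C)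
    (hg0 : 0 < g) (hg : ∑ i, deriv ℓ (x i) * w i = -(g * ∑ i, deriv ℓ (x i)))
    (hν0 : 0 < ν) (hν1 : ν ≤ 1) :
    ∑ i, ℓ (x i + ν * (g / C ^ 4) * w i) ≤
      (1 - ν * (2 - ν) * g ^ 2 / (2 * C ^ 6)) * ∑ i, ℓ (x i) := by
  have hC1 : 1 ≤ C := hC.1
  have hC0 : 0 < C := by linarith
  set f : ℝ → ℝ := fun s => ∑ i, ℓ (x i + s * w i) with hf
  set f' : ℝ → ℝ := fun s => ∑ i, deriv ℓ (x i + s * w i) * w i with hf'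
  set f'' : ℝ → ℝ := fun s => ∑ i, iteratedDeriv 2 ℓ (x i + s * w i) * w i * w i with hf''
  have hlin : ∀ i u, HasDerivAt (fun s : ℝ => x i + s * w i) (w i) u := fun i u => by
    simpa using ((hasDerivAt_id u).mul_const (w i)).const_add (x i)
  have hd1 : ∀ u, HasDerivAt f (f' u) u := fun u =>
    HasDerivAt.fun_sum fun i _ => (h.hasDerivAt0 _).comp u (hlin i u)
  have hd2 : ∀ u, HasDerivAt f' (f'' u) u := fun u =>
    HasDerivAt.fun_sum fun i _ => ((h.hasDerivAt1 _).comp u (hlin i u)).mul_const (w i)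
  set F := ∑ i, ℓ (x i) with hF
  set G := ∑ i, deriv ℓ (x i) with hG
  have hf0 : f 0 = F := by simp [hf, hF]
  have hf'0 : f' 0 = -(g * G) := by rw [← hg]; simp [hf']
  have hle : ∀ u, f u ≤ F → ∀ i, x i + u * w i ≤ z := by
    intro u hu i
    rw [← h.strictMono.le_iff_le, hz]
    refine le_trans ?_ hu
    exact Finset.single_le_sum (f := fun i => ℓ (x i + u * w i)) (fun j _ => (h.1 _).le)
      (Finset.mem_univ i)
  have hxz : ∀ i, x i ≤ z := fun i => by simpa using hle 0 hf0.le i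
  have hGpos : 0 < G := Finset.sum_pos (fun i _ => by
    have := h.pos (x i) (i := 1) (by norm_num)
    rwa [iteratedDeriv_one] at this) Finset.univ_nonempty
  have hFG : F ≤ C ^ 2 * G := by
    rw [hF, hG, Finset.mul_sum]
    refine Finset.sum_le_sum fun i _ => ?_
    have h1 := (hC.bounds (hxz i) (i := 0) (by norm_num)).2.2
    have h2 := (hC.bounds (hxz i) (i := 1) (by norm_num)).2.1
    rw [iteratedDeriv_zero] at h1
    rw [iteratedDeriv_one] at h2
    nlinarith
  have hcurv : ∀ u, f u ≤ F → f'' u ≤ C ^ 4 * G := by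
    intro u hu
    have : f'' u ≤ C ^ 2 * f u := by
      rw [hf, hf'']
      simp only
      rw [Finset.mul_sum]
      refine Finset.sum_le_sum fun i _ => ?_
      have h1 := (hC.bounds (hle u hu i) (i := 2) (by norm_num))
      have h2 := (hC.bounds (hle u hu i) (i := 0) (by norm_num)).2.1
      rw [iteratedDeriv_zero] at h2
      have h3 : w i * w i ≤ 1 := by
        have := (sq_le_one_iff_abs_le_one (w i)).2 (hw i)
        nlinarith
      have h4 : iteratedDeriv 2 ℓ (x i + u * w i) * w i * w i
          ≤ iteratedDeriv 2 ℓ (x i + u * w i) := by nlinarith [h1.1]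
      nlinarith [h1.2.2]
    have h2 : C ^ 2 * f u ≤ C ^ 2 * (C ^ 2 * G) := by gcongr; linarith
    nlinarith
  have htay : ∀ s, 0 ≤ s → (∀ u ∈ Set.Icc 0 s, f u ≤ F) →
      f s ≤ F - s * g * G + C ^ 4 * G * s ^ 2 / 2 := by
    intro s hs hu
    have := taylor_upper hs hd1 hd2 (K := C ^ 4 * G) (fun u hu' => hcurv u (hu u hu'))
    rw [hf0, hf'0] at this
    linarith
  have hconv : ∀ s, 0 < s → f s ≤ F → ∀ u ∈ Set.Icc 0 s, f u ≤ F := by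
    intro s hs hfs u hu
    have hus : u / s ≤ 1 := (div_le_one hs).2 hu.2
    have hu0 : 0 ≤ u / s := div_nonneg hu.1 hs.le
    have : f u ≤ (1 - u / s) * F + (u / s) * f s := by
      rw [hf, hF]
      simp only
      rw [Finset.mul_sum, Finset.mul_sum, ← Finset.sum_add_distrib]
      refine Finset.sum_le_sum fun i _ => ?_
      have hcv : ConvexOn ℝ Set.univ ℓ := h.2.2.1.convexOn
      have := hcv.2 (Set.mem_univ (x i)) (Set.mem_univ (x i + s * w i))
        (show 0 ≤ 1 - u / s by linarith) hu0 (by ring)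
      simp only [smul_eq_mul] at this
      have e : (1 - u / s) * x i + u / s * (x i + s * w i) = x i + u * w i := by
        field_simp; ring
      rwa [e] at this
    nlinarith
  set α := ν * (g / C ^ 4) with hα
  have hαpos : 0 < α := by positivity
  have hαC : α * C ^ 4 = ν * g := by rw [hα]; field_simp
  have hC4 : 0 < C ^ 4 := by positivity
  have hfα : f α ≤ F := by
    by_contra hcon
    push Not at hcon
    have hev : ∃ ε, 0 < ε ∧ ε < α ∧ f ε < F := by
      have hs := (hd1 0).tendsto_slope
      have hneg : f' 0 < 0 := by rw [hf'0]; nlinarith [mul_pos hg0 hGpos]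
      have h1 := hs.eventually (gt_mem_nhds hneg)
      have h2 : ∀ᶠ y in nhdsWithin (0:ℝ) (Set.Ioi 0), slope f 0 y < 0 :=
        h1.filter_mono (nhdsWithin_mono 0 (fun y (hy : 0 < y) => ne_of_gt hy))
      have h3 : ∀ᶠ y in nhdsWithin (0:ℝ) (Set.Ioi 0), y ∈ Set.Ioo 0 α :=
        Ioo_mem_nhdsGT hαpos
      obtain ⟨ε, he1, he2⟩ := (h2.and h3).exists
      refine ⟨ε, he2.1, he2.2, ?_⟩
      rw [slope_def_field, hf0, sub_zero, div_neg_iff] at he1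
      rcases he1 with he1 | he1
      · linarith [he2.1]
      · linarith
    obtain ⟨ε, e0, e1, e2⟩ := hev
    have hcf : ContinuousOn f (Set.Icc ε α) := fun u _ => (hd1 u).continuousAt.continuousWithinAt
    obtain ⟨s, hs, hfs⟩ := intermediate_value_Icc e1.le hcf ⟨e2.le, hcon.le⟩
    have hs0 : 0 < s := lt_of_lt_of_le e0 hs.1
    have ht := htay s hs0.le (hconv s hs0 hfs.le)
    rw [hfs] at ht
    have h1 : s * C ^ 4 ≤ g := by
      calc s * C ^ 4 ≤ α * C ^ 4 := by gcongr; exact hs.2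
        _ = ν * g := hαC
        _ ≤ g := by nlinarith
    have h2 : 0 < s * G := mul_pos hs0 hGpos
    nlinarith [mul_le_mul_of_nonneg_left h1 h2.le, mul_pos h2 hg0]
  have hfin := htay α hαpos.le (hconv α hαpos hfα)
  have e1 : F - α * g * G + C ^ 4 * G * α ^ 2 / 2 = F - ν * (2 - ν) * g ^ 2 / (2 * C ^ 4) * G := by
    rw [hα]; field_simp; ring
  have e2 : ν * (2 - ν) * g ^ 2 / (2 * C ^ 6) * F ≤ ν * (2 - ν) * g ^ 2 / (2 * C ^ 4) * G := by
    have hp : 0 ≤ ν * (2 - ν) * g ^ 2 / (2 * C ^ 6) := by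
      have : 0 ≤ 2 - ν := by linarith
      positivity
    calc _ ≤ ν * (2 - ν) * g ^ 2 / (2 * C ^ 6) * (C ^ 2 * G) := by gcongr
      _ = _ := by field_simp
  change f α ≤ _
  linarith


lemma MemL.deriv_pos {ℓ : ℝ → ℝ} (h : MemL ℓ) (x : ℝ) : 0 < deriv ℓ x := by
  have := h.pos x (i := 1) (by norm_num)
  rwa [iteratedDeriv_one] at this

lemma gOne_eq {m n : ℕ} {ℓ : ℝ → ℝ} (h : MemL ℓ) (A : Matrix (Fin m) (Fin n) ℝ)
    (l : Fin n → ℝ) : gOne ℓ A l = (∑ i, deriv ℓ (A.mulVec l i)) / m := by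
  unfold gOne gradL
  rw [Finset.sum_div]
  refine Finset.sum_congr rfl fun i _ => abs_of_nonneg ?_
  have := h.deriv_pos (A.mulVec l i)
  positivity

lemma gOne_pos {m n : ℕ} (hm : 0 < m) {ℓ : ℝ → ℝ} (h : MemL ℓ) (A : Matrix (Fin m) (Fin n) ℝ)
    (l : Fin n → ℝ) : 0 < gOne ℓ A l := by
  have : Nonempty (Fin m) := ⟨⟨0, hm⟩⟩
  rw [gOne_eq h]
  have : 0 < ∑ i, deriv ℓ (A.mulVec l i) :=
    Finset.sum_pos (fun i _ => h.deriv_pos _) Finset.univ_nonempty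
  positivity

lemma gammaHat_ge {m n : ℕ} (hm : 0 < m) {ℓ : ℝ → ℝ} (h : MemL ℓ)
    (A : Matrix (Fin m) (Fin n) ℝ) (l : Fin n → ℝ) : gammaMax A ≤ gammaHat ℓ A l := by
  have hg1 := gOne_pos hm h A l
  have hbd : BddAbove (Set.range fun j : Fin n => |∑ i, gradL ℓ A l i * A i j|) :=
    (Set.finite_range _).bddAbove
  have hI : 0 ≤ gInf ℓ A l := Real.iSup_nonneg fun j => abs_nonneg _
  refine Real.sSup_le ?_ (div_nonneg hI hg1.le)
  rintro r ⟨μ, hμ, rfl⟩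
  unfold gammaHat
  rw [le_div_iff₀ hg1]
  have hpos : ∀ i, 0 ≤ gradL ℓ A l i := fun i => by
    have := h.deriv_pos (A.mulVec l i)
    unfold gradL; positivity
  calc (⨅ i, -(A.mulVec μ i)) * gOne ℓ A l
      = ∑ i, gradL ℓ A l i * (⨅ i, -(A.mulVec μ i)) := by
        unfold gOne
        rw [Finset.mul_sum]
        exact Finset.sum_congr rfl fun i _ => by rw [abs_of_nonneg (hpos i), mul_comm]
    _ ≤ ∑ i, gradL ℓ A l i * (-(A.mulVec μ i)) := by
        refine Finset.sum_le_sum fun i _ => mul_le_mul_of_nonneg_left ?_ (hpos i)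
        exact ciInf_le (Set.finite_range _).bddBelow i
    _ = ∑ j, -(μ j) * ∑ i, gradL ℓ A l i * A i j := by
        simp only [Matrix.mulVec, dotProduct, ← Finset.sum_neg_distrib, Finset.mul_sum]
        rw [Finset.sum_comm]
        exact Finset.sum_congr rfl fun j _ => Finset.sum_congr rfl fun i _ => by ring
    _ ≤ ∑ j, |μ j| * gInf ℓ A l := by
        refine Finset.sum_le_sum fun j _ => ?_
        refine (le_abs_self _).trans ?_
        rw [abs_mul, abs_neg]
        exact mul_le_mul_of_nonneg_left (le_ciSup hbd j) (abs_nonneg _)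
    _ = gInf ℓ A l := by rw [← Finset.sum_mul, hμ, one_mul]

lemma sum_Icc_shift (f : ℕ → ℝ) (k : ℕ) :
    ∑ i ∈ Finset.Icc 1 k, f (i - 1) = ∑ i ∈ Finset.range k, f i := by
  induction k with
  | zero => simp
  | succ k ih => rw [Finset.sum_Icc_succ_top (by omega), ih, Finset.sum_range_succ]; simp

/-- margin lower bound for quadratic-upper-bound steps. -/
theorem margin_qub {m n : ℕ} (hm : 0 < m) (hn : 0 < n)
    (A : Matrix (Fin m) (Fin n) ℝ) (hA : ∀ i j, |A i j| ≤ 1)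
    (ℓ : ℝ → ℝ) (hℓ : MemLinf ℓ)
    (ν : ℝ) (hν : ν ∈ Set.Ioc (0:ℝ) 1)
    (hγ : 0 < gammaMax A)
    (lam : ℕ → Fin n → ℝ) (α : ℕ → ℝ) (v : ℕ → Fin n → ℝ)
    (hseq : IsBoostSeq ℓ A lam α v)
    (hstep : ∀ i : ℕ, 1 ≤ i →
      α i = ν * (gammaHat ℓ A (lam (i-1)) / (Cstep ℓ A (lam (i-1)))^4))
    (t₀ t : ℕ) (ht : t₀ < t)
    (htlb : 2 * (Cstep ℓ A (lam 0))^6 * Real.log m / ((gammaMax A)^2 * ν * (2-ν)) ≤ (t:ℝ)) :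
    margin A (lam t) ≥
      gammaMax A * ((2-ν) / (2 * (Cstep ℓ A (lam t₀))^6)) -
      Real.log (max 1
          ((m:ℝ) * Cstep ℓ A (lam t₀) * LL ℓ A (lam t₀) *
            Real.exp ((ν * (2-ν) / (2 * (Cstep ℓ A (lam t₀))^6)) *
              ∑ i ∈ Finset.Icc 1 t₀, (gammaHat ℓ A (lam (i-1)))^2))) /
        ((t:ℝ) * ν * gammaMax A) := by
  obtain ⟨hL, -⟩ := hℓ
  obtain ⟨hν0, hν1⟩ := hν
  obtain ⟨hl0, hls, hv, hgrad⟩ := hseq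
  have : Nonempty (Fin m) := ⟨⟨0, hm⟩⟩
  have hmR : (0:ℝ) < m := by exact_mod_cast hm
  set γ := gammaMax A with hγdef
  set S : ℕ → ℝ := fun k => ∑ i, ℓ (A.mulVec (lam k) i) with hS
  set C : ℕ → ℝ := fun k => Cstep ℓ A (lam k) with hC
  set g : ℕ → ℝ := fun k => gammaHat ℓ A (lam k) with hg
  have hSL : ∀ k, (m:ℝ) * LL ℓ A (lam k) = S k := fun k => by
    unfold LL; simp only [hS]; field_simp
  have hSpos : ∀ k, 0 < S k := fun k =>
    Finset.sum_pos (fun i _ => hL.1 _) Finset.univ_nonempty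
  set z : ℕ → ℝ := fun k => Function.invFun ℓ (S k) with hz
  have hzS : ∀ k, ℓ (z k) = S k := fun k => hL.invFun_eq (hSpos k)
  have hCz : ∀ k, C k = Cconst ℓ (z k) := fun k => by
    simp only [hC, hz, Cstep, hSL]
  have hCB : ∀ k, CBound ℓ (z k) (C k) := fun k => by rw [hCz]; exact hL.cbound _
  have hC1 : ∀ k, 1 ≤ C k := fun k => (hCB k).1
  have hC0 : ∀ k, 0 < C k := fun k => by linarith [hC1 k]
  have hgγ : ∀ k, γ ≤ g k := fun k => gammaHat_ge hm hL A (lam k)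
  have hg0 : ∀ k, 0 < g k := fun k => lt_of_lt_of_le hγ (hgγ k)
  have hνν : 0 < ν * (2 - ν) := mul_pos hν0 (by linarith)
  -- one-step decrease
  have hdec : ∀ k, S (k+1) ≤ (1 - ν * (2 - ν) * g k ^ 2 / (2 * C k ^ 6)) * S k := by
    intro k
    have h1 := hls (k+1) (by omega)
    have h2 := hstep (k+1) (by omega)
    have h3 := hgrad (k+1) (by omega)
    obtain ⟨s, hs, j, hj⟩ := hv (k+1) (by omega)
    simp only [Nat.add_sub_cancel] at h1 h2 h3
    have hw : ∀ i, |A.mulVec (v (k+1)) i| ≤ 1 := by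
      intro i
      rw [hj, Matrix.mulVec_smul]
      simp only [Pi.smul_apply, smul_eq_mul, Matrix.mulVec_single_one, Matrix.col_apply]
      rw [abs_mul]
      rcases hs with rfl | rfl <;> simpa using hA i j
    have hd : ∑ i, deriv ℓ (A.mulVec (lam k) i) * A.mulVec (v (k+1)) i
        = -(g k * ∑ i, deriv ℓ (A.mulVec (lam k) i)) := by
      have e1 : gInf ℓ A (lam k) = g k * ((∑ i, deriv ℓ (A.mulVec (lam k) i)) / m) := by
        rw [← gOne_eq hL]
        simp only [hg, gammaHat]
        rw [div_mul_cancel₀ _ (gOne_pos hm hL A (lam k)).ne']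
      rw [e1] at h3
      have e2 : ∑ i, gradL ℓ A (lam k) i * A.mulVec (v (k+1)) i
          = (∑ i, deriv ℓ (A.mulVec (lam k) i) * A.mulVec (v (k+1)) i) / m := by
        rw [Finset.sum_div]
        exact Finset.sum_congr rfl fun i _ => by unfold gradL; ring
      rw [e2] at h3
      field_simp at h3
      linarith
    have := qub_step hL (A.mulVec (lam k)) (A.mulVec (v (k+1))) hw (hzS k) (hCB k) (hg0 k) hd
      hν0 hν1
    refine le_trans (le_of_eq ?_) this
    simp only [hS]
    refine Finset.sum_congr rfl fun i _ => ?_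
    rw [h1, h2, Matrix.mulVec_add, Matrix.mulVec_smul]
    simp [hg, hC]
  have hSanti : Antitone S := by
    refine antitone_nat_of_succ_le fun k => (hdec k).trans ?_
    have : 0 ≤ ν * (2 - ν) * g k ^ 2 / (2 * C k ^ 6) := by
      have := hC0 k
      positivity
    nlinarith [hSpos k]
  have hzanti : Antitone z := fun a b hab => by
    rw [← hL.strictMono.le_iff_le, hzS, hzS]; exact hSanti hab
  have hCanti : Antitone C := fun a b hab => by
    rw [hCz, hCz]; exact hL.cconst_mono (hzanti hab)
  set P : ℕ → ℝ := fun k => ∑ i ∈ Finset.range k, g i ^ 2 with hP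
  -- telescoped decrease
  have htel : ∀ a d, S (a + d) ≤
      S a * Real.exp (-((ν * (2 - ν) / (2 * C a ^ 6)) * (P (a + d) - P a))) := by
    intro a d
    induction d with
    | zero => simp
    | succ d ih =>
      have hq : ν * (2 - ν) / (2 * C a ^ 6) * g (a+d) ^ 2
          ≤ ν * (2 - ν) * g (a+d) ^ 2 / (2 * C (a+d) ^ 6) := by
        rw [div_mul_eq_mul_div]
        have h1 := hC0 (a+d)
        have h2 := hCanti (Nat.le_add_right a d)
        gcongr
      have h1 : 1 - ν * (2 - ν) * g (a+d) ^ 2 / (2 * C (a+d) ^ 6)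
          ≤ Real.exp (-(ν * (2 - ν) / (2 * C a ^ 6) * g (a+d) ^ 2)) := by
        have := Real.add_one_le_exp (-(ν * (2 - ν) / (2 * C a ^ 6) * g (a+d) ^ 2))
        linarith
      have hPs : P (a + (d+1)) = P (a+d) + g (a+d) ^ 2 := by
        simp only [hP]; rw [← Nat.add_assoc, Finset.sum_range_succ]
      calc S (a + (d+1)) ≤ _ := hdec (a+d)
        _ ≤ Real.exp (-(ν * (2 - ν) / (2 * C a ^ 6) * g (a+d) ^ 2)) * S (a+d) :=
            mul_le_mul_of_nonneg_right h1 (hSpos _).le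
        _ ≤ Real.exp (-(ν * (2 - ν) / (2 * C a ^ 6) * g (a+d) ^ 2)) *
            (S a * Real.exp (-((ν * (2 - ν) / (2 * C a ^ 6)) * (P (a + d) - P a)))) := by
            gcongr
        _ = _ := by
            rw [hPs, mul_left_comm, ← Real.exp_add]
            congr 2
            ring
  have hle : ∀ k i, ℓ (A.mulVec (lam k) i) ≤ S k := fun k i =>
    Finset.single_le_sum (f := fun i => ℓ (A.mulVec (lam k) i)) (fun j _ => (hL.1 _).le)
      (Finset.mem_univ i)
  have htR : (0:ℝ) < t := by exact_mod_cast (by omega : 0 < t)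
  have hPt : γ * ∑ i ∈ Finset.range t, g i ≤ P t := by
    rw [Finset.mul_sum]
    refine Finset.sum_le_sum fun i _ => ?_
    nlinarith [hgγ i, hg0 i]
  have hGt : (t:ℝ) * γ ≤ ∑ i ∈ Finset.range t, g i := by
    have := Finset.card_nsmul_le_sum (Finset.range t) g γ (fun i _ => hgγ i)
    simpa using this
  set Q := ∑ i ∈ Finset.range t, g i with hQ
  have hQ0 : 0 < Q := lt_of_lt_of_le (mul_pos htR hγ) hGt
  -- the margin is nonnegative
  have hneg : ∀ i, A.mulVec (lam t) i ≤ 0 := by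
    intro i
    rw [← hL.strictMono.le_iff_le]
    refine (hle t i).trans ?_
    have h1 := htel 0 t
    have hP0 : P 0 = 0 := by simp [hP]
    have hS0 : S 0 = m * ℓ 0 := by simp [hS, hl0]
    rw [Nat.zero_add, hP0, sub_zero, hS0] at h1
    refine h1.trans ?_
    have hlog : Real.log m ≤ ν * (2 - ν) / (2 * C 0 ^ 6) * P t := by
      have hc := hC0 0
      change 2 * (C 0)^6 * Real.log m / (γ^2 * ν * (2-ν)) ≤ (t:ℝ) at htlb
      have h2ν : 0 < 2 - ν := by linarith
      rw [div_le_iff₀ (by positivity)] at htlb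
      rw [div_mul_eq_mul_div, le_div_iff₀ (by positivity)]
      have h5 : (t:ℝ) * γ ^ 2 ≤ P t := by nlinarith
      nlinarith [mul_le_mul_of_nonneg_left h5 hνν.le]
    have h3 : Real.exp (-(ν * (2 - ν) / (2 * C 0 ^ 6) * P t)) ≤ (m:ℝ)⁻¹ := by
      rw [← Real.exp_log hmR, ← Real.exp_neg]
      exact Real.exp_le_exp.2 (by linarith)
    calc _ ≤ m * ℓ 0 * (m:ℝ)⁻¹ := by
            have := hL.1 0
            gcongr
      _ = ℓ 0 := by field_simp
  -- upper bound on the norm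
  have hnorm : ∀ k, ∑ j, |lam k j| ≤ ν * ∑ i ∈ Finset.range k, g i := by
    intro k
    induction k with
    | zero => simp [hl0]
    | succ k ih =>
      have h1 := hls (k+1) (by omega)
      have h2 := hstep (k+1) (by omega)
      obtain ⟨s, hs, j, hj⟩ := hv (k+1) (by omega)
      simp only [Nat.add_sub_cancel] at h1 h2
      have hα : |α (k+1)| ≤ ν * g k := by
        rw [h2]
        change |ν * (g k / C k ^ 4)| ≤ _
        have := hg0 k
        have := hC0 k
        rw [abs_of_nonneg (by positivity)]
        gcongr
        exact div_le_self (hg0 k).le (one_le_pow₀ (hC1 k))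
      have hv1 : ∑ i, |v (k+1) i| = 1 := by
        rw [hj]
        rw [Finset.sum_eq_single j]
        · rcases hs with rfl | rfl <;> simp
        · intro b _ hb; simp [hb]
        · simp
      rw [Finset.sum_range_succ, h1]
      calc ∑ i, |(lam k + α (k+1) • v (k+1)) i|
          ≤ ∑ i, (|lam k i| + |α (k+1)| * |v (k+1) i|) := by
            refine Finset.sum_le_sum fun i _ => ?_
            simp only [Pi.add_apply, Pi.smul_apply, smul_eq_mul]
            rw [← abs_mul]
            exact abs_add_le _ _
        _ = ∑ i, |lam k i| + |α (k+1)| := by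
            rw [Finset.sum_add_distrib, ← Finset.mul_sum, hv1, mul_one]
        _ ≤ _ := by linarith
  rw [sum_Icc_shift (fun i => gammaHat ℓ A (lam i) ^ 2) t₀]
  change margin A (lam t) ≥ γ * ((2-ν) / (2 * (C t₀)^6)) -
      Real.log (max 1 ((m:ℝ) * C t₀ * LL ℓ A (lam t₀) *
            Real.exp ((ν * (2-ν) / (2 * (C t₀)^6)) * P t₀))) / ((t:ℝ) * ν * γ)
  rw [show (m:ℝ) * C t₀ * LL ℓ A (lam t₀) = C t₀ * S t₀ by rw [← hSL]; ring]
  set κ := ν * (2-ν) / (2 * (C t₀)^6) with hκ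
  have hκ0 : 0 < κ := by have := hC0 t₀; positivity
  set c₀ := max 1 (C t₀ * S t₀ * Real.exp (κ * P t₀)) with hc₀
  have hc1 : 1 ≤ c₀ := le_max_left _ _
  have hlc : 0 ≤ Real.log c₀ := Real.log_nonneg hc1
  have hkey : ∀ i, κ * P t - Real.log c₀ ≤ -(A.mulVec (lam t) i) := by
    intro i
    have hxz : A.mulVec (lam t) i ≤ z t₀ := by
      rw [← hL.strictMono.le_iff_le, hzS]
      exact (hle t i).trans (hSanti ht.le)
    have h1 := ((hCB t₀).bounds hxz (i := 0) (by norm_num)).2.1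
    rw [iteratedDeriv_zero] at h1
    have h2 := htel t₀ (t - t₀)
    rw [Nat.add_sub_cancel' ht.le] at h2
    have h3 : Real.exp (A.mulVec (lam t) i) ≤ Real.exp (Real.log c₀ - κ * P t) := by
      calc _ ≤ C t₀ * (S t₀ * Real.exp (-(κ * (P t - P t₀)))) :=
            h1.trans (mul_le_mul_of_nonneg_left ((hle t i).trans h2) (hC0 t₀).le)
        _ = C t₀ * S t₀ * Real.exp (κ * P t₀) * Real.exp (-(κ * P t)) := by
            rw [mul_assoc _ (Real.exp _), ← Real.exp_add, mul_assoc]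
            congr 3
            ring
        _ ≤ c₀ * Real.exp (-(κ * P t)) := by
            gcongr
            exact le_max_right _ _
        _ = _ := by
            rw [sub_eq_add_neg, Real.exp_add, Real.exp_log (by linarith)]
    linarith [Real.exp_le_exp.1 h3]
  have hrhs : γ * ((2-ν) / (2 * (C t₀)^6)) = κ * γ / ν := by
    rw [hκ]
    have := hC0 t₀
    field_simp
  rw [hrhs]
  have hR : κ * γ / ν - Real.log c₀ / (t * ν * γ) ≤ (κ * P t - Real.log c₀) / (ν * Q) := by
    rw [sub_div]
    refine sub_le_sub ?_ ?_
    · rw [div_le_div_iff₀ hν0 (by positivity)]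
      nlinarith [mul_le_mul_of_nonneg_left hPt (mul_pos hκ0 hν0).le]
    · refine div_le_div_of_nonneg_left hlc (by positivity) ?_
      nlinarith
  refine le_trans hR ?_
  refine le_ciInf fun i => ?_
  have hn0 : 0 ≤ ∑ j, |lam t j| := Finset.sum_nonneg fun j _ => abs_nonneg _
  rcases le_or_gt (κ * P t - Real.log c₀) 0 with hN | hN
  · refine le_trans (div_nonpos_of_nonpos_of_nonneg hN (by positivity)) ?_
    exact div_nonneg (by linarith [hneg i]) hn0
  · have hp : 0 < ∑ j, |lam t j| := by
      refine lt_of_le_of_ne hn0 fun h0 => ?_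
      have hz0 : lam t = 0 := by
        funext j
        have := (Finset.sum_eq_zero_iff_of_nonneg (fun j _ => abs_nonneg (lam t j))).1 h0.symm j
          (Finset.mem_univ j)
        simpa using this
      have := hkey i
      rw [hz0] at this
      simp at this
      linarith
    exact div_le_div₀ (by linarith [hneg i]) (hkey i) hp (hnorm t)
end
end
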